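/- Let P and Q be finite sets of points in the plane (possibly containing collinear triples), each of cardinality n, each not contained in a line, such that P and Q have the same number k of internal points, where k = 1 or k = 2. Then there exist a triangulation T_P of P and a triangulation T_Q of Q that are compatible. -/

import Mathlib

open Set

/-- Points of the plane. -/
abbrev Pt : Type := ℝ × ℝ

noncomputable section

/-- The determinant of two plane vectors. -/
def det2 (u v : Pt) : ℝ := u.1 * v.2 - u.2 * v.1

/-- A triple `(a,b,c)` of points is clockwise-ordered if `det (b-a, c-a) < 0`. -/
def Clockwise (a b c : Pt) : Prop := det2 (b - a) (c - a) < 0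

/-- The closed segments `[a,b]` and `[c,d]` cross: they intersect in a point that is not a
common endpoint of the two segments. -/
def Crosses (a b c d : Pt) : Prop :=
  ∃ x : Pt, x ∈ segment ℝ a b ∧ x ∈ segment ℝ c d ∧
    ¬((x = a ∨ x = b) ∧ (x = c ∨ x = d))

/-- `T` is a set of unordered pairs of distinct points of `P` whose corresponding
segments are pairwise non-crossing. -/
def ValidSegs (P : Finset Pt) (T : Set (Sym2 Pt)) : Prop :=
  (∀ e ∈ T, ∃ a b : Pt, a ∈ P ∧ b ∈ P ∧ a ≠ b ∧ e = s(a, b)) ∧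
  (∀ a b c d : Pt, s(a, b) ∈ T → s(c, d) ∈ T → s(a, b) ≠ s(c, d) → ¬ Crosses a b c d)

/-- A triangulation of `P`: a maximal (w.r.t. inclusion) set of unordered pairs of distinct
points of `P`, no two of whose segments cross. -/
def IsTriangulation (P : Finset Pt) (T : Set (Sym2 Pt)) : Prop :=
  ValidSegs P T ∧ ∀ T' : Set (Sym2 Pt), ValidSegs P T' → T ⊆ T' → T' = T

/-- A convex hull point of `P`: a point of `P` on the boundary of `conv P`. -/
def HullPoint (P : Finset Pt) (p : Pt) : Prop :=
  p ∈ P ∧ p ∈ frontier (convexHull ℝ (P : Set Pt))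

/-- An internal point of `P`: a point of `P` in the interior of `conv P`. -/
def InternalPoint (P : Finset Pt) (p : Pt) : Prop :=
  p ∈ P ∧ p ∈ interior (convexHull ℝ (P : Set Pt))

/-- The number of convex hull points of `P`. -/
def hullCount (P : Finset Pt) : ℕ := {p : Pt | HullPoint P p}.ncard

/-- The number of internal points of `P`. -/
def internalCount (P : Finset Pt) : ℕ := {p : Pt | InternalPoint P p}.ncard

/-- The open triangle with vertices `a`, `b`, `c`. -/
def openTriangle (a b c : Pt) : Set Pt := interior (convexHull ℝ ({a, b, c} : Set Pt))

/-- `(a,b,c)` is a triangle of the triangulation `T` of `P`: the three points are distinct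
points of `P`, the three pairs are in `T`, and the open triangle `abc` contains no point of
`P` and meets no segment of `T`. -/
def IsTriangleOf (P : Finset Pt) (T : Set (Sym2 Pt)) (a b c : Pt) : Prop :=
  a ∈ P ∧ b ∈ P ∧ c ∈ P ∧ a ≠ b ∧ b ≠ c ∧ a ≠ c ∧
  s(a, b) ∈ T ∧ s(b, c) ∈ T ∧ s(a, c) ∈ T ∧
  (∀ p ∈ P, p ∉ openTriangle a b c) ∧
  (∀ u v : Pt, s(u, v) ∈ T → ∀ x ∈ segment ℝ u v, x ∉ openTriangle a b c)

/-- Triangulations `TP` of `P` and `TQ` of `Q` are compatible via the bijection `φ : P → Q`: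
`(a,b,c)` is a clockwise-ordered triangle of `TP` iff `(φ a, φ b, φ c)` is a
clockwise-ordered triangle of `TQ`. -/
def CompatibleVia (P Q : Finset Pt) (TP TQ : Set (Sym2 Pt)) (φ : Pt → Pt) : Prop :=
  Set.BijOn φ (P : Set Pt) (Q : Set Pt) ∧
  ∀ a b c : Pt, a ∈ P → b ∈ P → c ∈ P →
    ((IsTriangleOf P TP a b c ∧ Clockwise a b c) ↔
     (IsTriangleOf Q TQ (φ a) (φ b) (φ c) ∧ Clockwise (φ a) (φ b) (φ c)))

/-- Triangulations `TP` of `P` and `TQ` of `Q` are compatible. -/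
def Compatible (P Q : Finset Pt) (TP TQ : Set (Sym2 Pt)) : Prop :=
  ∃ φ : Pt → Pt, CompatibleVia P Q TP TQ φ

/-- The degree of a point `p` in a triangulation `T`: the number of pairs of `T`
containing `p`. -/
def degreeIn (T : Set (Sym2 Pt)) (p : Pt) : ℕ := {e ∈ T | p ∈ e}.ncard

/-- `P` is in general position: no three points of `P` are collinear. -/
def GenPos (P : Finset Pt) : Prop :=
  ∀ a b c : Pt, a ∈ P → b ∈ P → c ∈ P → a ≠ b → b ≠ c → a ≠ c →
    ¬ Collinear ℝ ({a, b, c} : Set Pt)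

end


/-! ### Orientation determinants -/

/-- Orientation determinant of a triple. -/
def ori (a b c : Pt) : ℝ := (b.1 - a.1) * (c.2 - a.2) - (b.2 - a.2) * (c.1 - a.1)

theorem clockwise_iff (a b c : Pt) : Clockwise a b c ↔ 0 < ori a c b := by
  unfold Clockwise det2 ori
  simp only [Prod.fst_sub, Prod.snd_sub]
  constructor <;> intro h <;> linarith

theorem ori_rot (a b c : Pt) : ori b c a = ori a b c := by unfold ori; ring
theorem ori_swap (a b c : Pt) : ori a c b = - ori a b c := by unfold ori; ring
theorem ori_swap' (a b c : Pt) : ori b a c = - ori a b c := by unfold ori; ring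
@[simp] theorem ori_aab (a b : Pt) : ori a a b = 0 := by unfold ori; ring
@[simp] theorem ori_aba (a b : Pt) : ori a b a = 0 := by unfold ori; ring
@[simp] theorem ori_abb (a b : Pt) : ori a b b = 0 := by unfold ori; ring

theorem ori_comb (u v a b : Pt) (s t : ℝ) (h : s + t = 1) :
    ori u v (s • a + t • b) = s * ori u v a + t * ori u v b := by
  obtain rfl : s = 1 - t := by linarith
  unfold ori
  simp only [Prod.fst_add, Prod.snd_add, Prod.smul_fst, Prod.smul_snd, smul_eq_mul]
  ring

theorem ori_comb3 (u v a b c : Pt) (r s t : ℝ) (h : r + s + t = 1) :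
    ori u v (r • a + s • b + t • c) = r * ori u v a + s * ori u v b + t * ori u v c := by
  obtain rfl : r = 1 - s - t := by linarith
  unfold ori
  simp only [Prod.fst_add, Prod.snd_add, Prod.smul_fst, Prod.smul_snd, smul_eq_mul]
  ring

theorem ori_bary (a b c x u v : Pt) :
    ori a b c * ori u v x = ori b c x * ori u v a + ori c a x * ori u v b + ori a b x * ori u v c := by
  unfold ori; ring

theorem ori_sum (a b c x : Pt) : ori b c x + ori c a x + ori a b x = ori a b c := by
  unfold ori; ring

theorem plucker (q a b c d : Pt) :
    ori q a b * ori q c d - ori q a c * ori q b d + ori q a d * ori q b c = 0 := by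
  unfold ori; ring

theorem bary_eq {a b c : Pt} (h : 0 < ori a b c) (x : Pt) :
    x = (ori b c x / ori a b c) • a + (ori c a x / ori a b c) • b + (ori a b x / ori a b c) • c := by
  have h' := h.ne'
  ext
  · simp only [Prod.fst_add, Prod.smul_fst, smul_eq_mul]
    field_simp
    unfold ori; ring
  · simp only [Prod.snd_add, Prod.smul_snd, smul_eq_mul]
    field_simp
    unfold ori; ring

theorem ori_ne_of_pos {a b c : Pt} (h : 0 < ori a b c) : a ≠ b ∧ b ≠ c ∧ a ≠ c := by
  refine ⟨?_, ?_, ?_⟩ <;> rintro rfl <;> simp at h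

/-- Closed triangle membership. -/
def InTri (a b c x : Pt) : Prop := 0 ≤ ori a b x ∧ 0 ≤ ori b c x ∧ 0 ≤ ori c a x

/-- Open triangle membership. -/
def InTriO (a b c x : Pt) : Prop := 0 < ori a b x ∧ 0 < ori b c x ∧ 0 < ori c a x

theorem InTriO.le {a b c x : Pt} (h : InTriO a b c x) : InTri a b c x :=
  ⟨h.1.le, h.2.1.le, h.2.2.le⟩

theorem InTri.rot {a b c x : Pt} (h : InTri a b c x) : InTri b c a x := ⟨h.2.1, h.2.2, h.1⟩
theorem InTriO.rot {a b c x : Pt} (h : InTriO a b c x) : InTriO b c a x := ⟨h.2.1, h.2.2, h.1⟩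

theorem mem_segment_of_ori {a b c x : Pt} (h : 0 < ori a b c) (h0 : ori a b x = 0)
    (h1 : 0 ≤ ori b c x) (h2 : 0 ≤ ori c a x) : x ∈ segment ℝ a b := by
  refine ⟨ori b c x / ori a b c, ori c a x / ori a b c, by positivity, by positivity, ?_, ?_⟩
  · have := ori_sum a b c x
    rw [← add_div, div_eq_one_iff_eq h.ne']; linarith
  · conv_rhs => rw [bary_eq h x]
    simp [h0]

theorem seg_inTri {a b c x : Pt} (h : 0 < ori a b c) (hx : x ∈ segment ℝ a b) :
    InTri a b c x ∧ ori a b x = 0 := by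
  obtain ⟨s, t, hs, ht, hst, rfl⟩ := hx
  have e1 : ori b c a = ori a b c := ori_rot a b c
  have e2 : ori c a b = ori a b c := by rw [ori_rot, ori_rot]
  refine ⟨⟨?_, ?_, ?_⟩, ?_⟩ <;> rw [ori_comb _ _ _ _ _ _ hst] <;> simp [e1, e2] <;> positivity

theorem inTri_convexHull {a b c x : Pt} (h : 0 < ori a b c) (hx : InTri a b c x) :
    x ∈ convexHull ℝ ({a, b, c} : Set Pt) := by
  obtain ⟨h1, h2, h3⟩ := hx
  rw [bary_eq h x]
  have hs := ori_sum a b c x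
  have hh : ori b c x / ori a b c + ori c a x / ori a b c + ori a b x / ori a b c = 1 := by
    rw [← add_div, ← add_div, div_eq_one_iff_eq h.ne']; linarith
  have hc := convex_convexHull ℝ ({a, b, c} : Set Pt)
  have := hc.sum_mem
    (t := (Finset.univ : Finset (Fin 3)))
    (w := ![ori b c x / ori a b c, ori c a x / ori a b c, ori a b x / ori a b c])
    (z := ![a, b, c]) ?_ ?_ ?_
  · simpa [Fin.sum_univ_three] using this
  · intro i _; fin_cases i <;> simp <;> positivity
  · simpa [Fin.sum_univ_three] using hh
  · intro i _; apply subset_convexHull; fin_cases i <;> simp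

theorem ori_nonneg_convexHull {S : Set Pt} {u v : Pt} (h : ∀ z ∈ S, 0 ≤ ori u v z) {x : Pt}
    (hx : x ∈ convexHull ℝ S) : 0 ≤ ori u v x := by
  have hc : Convex ℝ {x : Pt | 0 ≤ ori u v x} := by
    intro y hy z hz s t hs ht hst
    simp only [Set.mem_ofPred_eq] at *
    rw [ori_comb _ _ _ _ _ _ hst]; positivity
  exact convexHull_min h hc hx

theorem continuous_ori (u v : Pt) : Continuous (fun x => ori u v x) := by
  unfold ori; fun_prop

theorem ori_pos_interior {S : Set Pt} {u v : Pt} (huv : u ≠ v) (h : ∀ z ∈ S, 0 ≤ ori u v z) {x : Pt}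
    (hx : x ∈ interior S) : 0 < ori u v x := by
  have h0 := h x (interior_subset hx)
  rcases h0.lt_or_eq with h1 | h1
  · exact h1
  exfalso
  have hn : S ∈ nhds x := mem_interior_iff_mem_nhds.1 hx
  set w : Pt := (v.2 - u.2, -(v.1 - u.1)) with hw
  have hcont : Continuous (fun e : ℝ => x + e • w) := by fun_prop
  have ht : ∀ᶠ e in nhds (0 : ℝ), x + e • w ∈ S := by
    apply hcont.continuousAt.eventually
    simpa using hn
  have ht2 : ∀ᶠ e in nhdsWithin (0 : ℝ) (Ioi 0), x + e • w ∈ S ∧ 0 < e :=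
    (ht.filter_mono nhdsWithin_le_nhds).and self_mem_nhdsWithin
  obtain ⟨e, he, he0⟩ := ht2.exists
  have h2 := h _ he
  have h3 : ori u v (x + e • w) = ori u v x - e * ((v.1 - u.1)^2 + (v.2-u.2)^2) := by
    unfold ori; simp [hw]; ring
  have h4 : 0 < (v.1 - u.1)^2 + (v.2-u.2)^2 := by
    by_contra hcon
    apply huv
    have e1 : (v.1 - u.1) = 0 := by nlinarith [sq_nonneg (v.1-u.1), sq_nonneg (v.2-u.2)]
    have e2 : (v.2 - u.2) = 0 := by nlinarith [sq_nonneg (v.1-u.1), sq_nonneg (v.2-u.2)]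
    ext <;> linarith
  have := mul_pos he0 h4
  linarith

theorem isOpen_inTriO (a b c : Pt) : IsOpen {x | InTriO a b c x} :=
  ((isOpen_lt continuous_const (continuous_ori a b)).inter
    ((isOpen_lt continuous_const (continuous_ori b c)).inter
    (isOpen_lt continuous_const (continuous_ori c a))))

theorem isClosed_inTri (a b c : Pt) : IsClosed {x | InTri a b c x} :=
  ((isClosed_le continuous_const (continuous_ori a b)).inter
    ((isClosed_le continuous_const (continuous_ori b c)).inter
    (isClosed_le continuous_const (continuous_ori c a))))

theorem mem_openTriangle {a b c : Pt} (h : 0 < ori a b c) (x : Pt) :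
    x ∈ openTriangle a b c ↔ InTriO a b c x := by
  have e1 : ori b c a = ori a b c := ori_rot a b c
  have e2 : ori c a b = ori a b c := by rw [ori_rot, ori_rot]
  obtain ⟨n1, n2, n3⟩ := ori_ne_of_pos h
  constructor
  · intro hx
    refine ⟨ori_pos_interior n1 ?_ hx, ori_pos_interior n2 ?_ hx, ori_pos_interior n3.symm ?_ hx⟩ <;>
    · intro z hz
      refine ori_nonneg_convexHull ?_ hz
      intro z hz
      simp only [mem_insert_iff, mem_singleton_iff] at hz
      rcases hz with rfl | rfl | rfl <;> simp [e1, e2, h.le]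
  · intro hx
    apply interior_maximal _ (isOpen_inTriO a b c) hx
    intro y hy
    exact inTri_convexHull h hy.le

theorem openTriangle_swap (a b c : Pt) : openTriangle a b c = openTriangle a c b := by
  unfold openTriangle
  rw [show ({a, b, c} : Set Pt) = {a, c, b} by rw [Set.pair_comm b c]]

/-! ### Families of triangles -/

/-- A geometric triangulation given by a family of counterclockwise triples. -/
structure Tri (P : Finset Pt) (K : Pt → Pt → Pt → Prop) : Prop where
  rot : ∀ {a b c}, K a b c → K b c a
  mem : ∀ {a b c}, K a b c → a ∈ P
  pos : ∀ {a b c}, K a b c → 0 < ori a b c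
  empt : ∀ {a b c z}, K a b c → z ∈ P → InTri a b c z → z = a ∨ z = b ∨ z = c
  cover : ∀ {x}, x ∈ convexHull ℝ (P : Set Pt) → ∃ a b c, K a b c ∧ InTri a b c x
  disj : ∀ {a b c a' b' c' x}, K a b c → K a' b' c' → InTriO a b c x → InTriO a' b' c' x →
    (a' = a ∧ b' = b ∧ c' = c) ∨ (a' = b ∧ b' = c ∧ c' = a) ∨ (a' = c ∧ b' = a ∧ c' = b)

/-- The edges of a family of triangles. -/
def edges (K : Pt → Pt → Pt → Prop) : Set (Sym2 Pt) := {e | ∃ a b c, K a b c ∧ e = s(a, b)}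

theorem small_eps (r1 r2 r3 s1 s2 s3 : ℝ) (h1 : 0 < r1) (h2 : 0 < r2) (h3 : 0 < r3) :
    ∃ e : ℝ, 0 < e ∧ e < 1 ∧ 0 < (1 - e) * r1 + e * s1 ∧ 0 < (1 - e) * r2 + e * s2 ∧
      0 < (1 - e) * r3 + e * s3 := by
  have key : ∀ r s : ℝ, 0 < r → ∀ᶠ e in nhdsWithin (0 : ℝ) (Ioi 0), 0 < (1 - e) * r + e * s := by
    intro r s hr
    have hc : Continuous (fun e : ℝ => (1 - e) * r + e * s) := by fun_prop
    have : ∀ᶠ e in nhds (0 : ℝ), 0 < (1 - e) * r + e * s := by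
      apply hc.continuousAt.eventually_const_lt
      simpa using hr
    exact this.filter_mono nhdsWithin_le_nhds
  have h0 : ∀ᶠ e in nhdsWithin (0 : ℝ) (Ioi 0), 0 < e := self_mem_nhdsWithin
  have h1' : ∀ᶠ e in nhdsWithin (0 : ℝ) (Ioi 0), e < 1 :=
    (eventually_lt_nhds (by norm_num : (0 : ℝ) < 1)).filter_mono nhdsWithin_le_nhds
  obtain ⟨e, a, b, c, d, f⟩ :=
    (h0.and (h1'.and ((key r1 s1 h1).and ((key r2 s2 h2).and (key r3 s3 h3))))).exists
  exact ⟨e, a, b, c, d, f⟩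

theorem centroid_inTriO {a b c : Pt} (h : 0 < ori a b c) : ∃ g, InTriO a b c g := by
  have e1 : ori b c a = ori a b c := ori_rot a b c
  have e2 : ori c a b = ori a b c := by rw [ori_rot, ori_rot]
  refine ⟨(1/3 : ℝ) • a + (1/3 : ℝ) • b + (1/3 : ℝ) • c, ?_, ?_, ?_⟩ <;>
  · rw [ori_comb3 _ _ _ _ _ _ _ _ (by norm_num)]
    simp [e1, e2, h]

/-- An open triangle that meets a closed triangle meets its interior. -/
theorem open_meet {a b c a' b' c' x : Pt} (h' : 0 < ori a' b' c')
    (hx : InTriO a b c x) (hx' : InTri a' b' c' x) : ∃ y, InTriO a b c y ∧ InTriO a' b' c' y := by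
  obtain ⟨g, g1, g2, g3⟩ := centroid_inTriO h'
  obtain ⟨e, e0, e1, k1, k2, k3⟩ := small_eps _ _ _ (ori a b g) (ori b c g) (ori c a g)
    hx.1 hx.2.1 hx.2.2
  obtain ⟨x1, x2, x3⟩ := hx'
  have e1' : 0 < 1 - e := by linarith
  refine ⟨(1 - e) • x + e • g, ⟨?_, ?_, ?_⟩, ⟨?_, ?_, ?_⟩⟩ <;>
    rw [ori_comb _ _ _ _ _ _ (by ring)] <;> first | assumption | positivity

section
variable {P : Finset Pt} {K : Pt → Pt → Pt → Prop}

theorem Tri.disj' (hT : Tri P K) {a b c a' b' c' x : Pt} (h : K a b c) (h' : K a' b' c')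
    (hx : InTriO a b c x) (hx' : InTri a' b' c' x) :
    (a' = a ∧ b' = b ∧ c' = c) ∨ (a' = b ∧ b' = c ∧ c' = a) ∨ (a' = c ∧ b' = a ∧ c' = b) := by
  obtain ⟨y, y1, y2⟩ := open_meet (hT.pos h') hx hx'
  exact hT.disj h h' y1 y2

theorem overlap_aux {t γ δ : ℝ} (t0 : t ≠ 0) (t1 : t ≠ 1) (tc : t ≠ γ) (td : t ≠ δ)
    (ht : 0 ≤ t ∧ t ≤ 1) (htc : γ ≤ t ∧ t ≤ δ ∨ δ ≤ t ∧ t ≤ γ)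
    (jc : 0 ≤ γ → γ ≤ 1 → γ = 0 ∨ γ = 1) (jd : 0 ≤ δ → δ ≤ 1 → δ = 0 ∨ δ = 1)
    (ja : (γ ≤ 0 ∧ 0 ≤ δ ∧ γ < δ ∨ δ ≤ 0 ∧ 0 ≤ γ ∧ δ < γ) → γ = 0 ∨ δ = 0)
    (jb : (γ ≤ 1 ∧ 1 ≤ δ ∧ γ < δ ∨ δ ≤ 1 ∧ 1 ≤ γ ∧ δ < γ) → γ = 1 ∨ δ = 1) :
    (γ = 0 ∧ δ = 1) ∨ (δ = 0 ∧ γ = 1) := by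
  have u0 : 0 < t := lt_of_le_of_ne ht.1 t0.symm
  have u1 : t < 1 := lt_of_le_of_ne ht.2 t1
  rcases htc with ⟨h1, h2⟩ | ⟨h1, h2⟩
  · have v1 : γ < t := lt_of_le_of_ne h1 tc.symm
    have v2 : t < δ := lt_of_le_of_ne h2 td
    left
    constructor
    · rcases le_total 0 γ with h | h
      · rcases jc h (by linarith) with h | h
        · exact h
        · linarith
      · rcases ja (Or.inl ⟨h, by linarith, by linarith⟩) with h | h
        · exact h
        · linarith
    · rcases le_total δ 1 with h | h
      · rcases jd (by linarith) h with h | h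
        · linarith
        · exact h
      · rcases jb (Or.inl ⟨by linarith, h, by linarith⟩) with h | h
        · linarith
        · exact h
  · have v1 : δ < t := lt_of_le_of_ne h1 td.symm
    have v2 : t < γ := lt_of_le_of_ne h2 tc
    right
    constructor
    · rcases le_total 0 δ with h | h
      · rcases jd h (by linarith) with h | h
        · exact h
        · linarith
      · rcases ja (Or.inr ⟨h, by linarith, by linarith⟩) with h | h
        · linarith
        · exact h
    · rcases le_total γ 1 with h | h
      · rcases jc (by linarith) h with h | h
        · linarith
        · exact h
      · rcases jb (Or.inr ⟨by linarith, h, by linarith⟩) with h | h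
        · exact h
        · linarith

/-- Overlapping collinear segments with no endpoint inside the other one are equal. -/
theorem collinear_overlap {a b c d x : Pt} (hab : a ≠ b) (hc : ori a b c = 0) (hd : ori a b d = 0)
    (hx : x ∈ segment ℝ a b) (hx' : x ∈ segment ℝ c d)
    (na : x ≠ a) (nb : x ≠ b) (nc : x ≠ c) (nd : x ≠ d)
    (kc : c ∈ segment ℝ a b → c = a ∨ c = b) (kd : d ∈ segment ℝ a b → d = a ∨ d = b)
    (ka : a ∈ segment ℝ c d → a = c ∨ a = d) (kb : b ∈ segment ℝ c d → b = c ∨ b = d) :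
    (a = c ∧ b = d) ∨ (a = d ∧ b = c) := by
  have par : ∀ z, ori a b z = 0 → ∃ t : ℝ, z = (1 - t) • a + t • b := by
    intro z hz
    by_cases h1 : b.1 - a.1 = 0
    · have h2 : b.2 - a.2 ≠ 0 := by
        intro h2; apply hab; ext <;> linarith
      refine ⟨(z.2 - a.2) / (b.2 - a.2), ?_⟩
      unfold ori at hz
      rw [h1, zero_mul, zero_sub, neg_eq_zero, mul_eq_zero, or_iff_right h2] at hz
      ext
      · simp only [Prod.fst_add, Prod.smul_fst, smul_eq_mul]
        have : b.1 = a.1 := by linarith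
        rw [this]; linear_combination hz
      · simp only [Prod.snd_add, Prod.smul_snd, smul_eq_mul]
        field_simp; ring
    · refine ⟨(z.1 - a.1) / (b.1 - a.1), ?_⟩
      unfold ori at hz
      ext
      · simp only [Prod.fst_add, Prod.smul_fst, smul_eq_mul]
        field_simp; ring
      · simp only [Prod.snd_add, Prod.smul_snd, smul_eq_mul]
        field_simp; linear_combination hz
  have mem : ∀ t : ℝ, 0 ≤ t → t ≤ 1 → (1 - t) • a + t • b ∈ segment ℝ a b := by
    intro t h0 h1
    exact ⟨1 - t, t, by linarith, h0, by ring, rfl⟩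
  have inj : ∀ t r : ℝ, (1 - t) • a + t • b = (1 - r) • a + r • b → t = r := by
    intro t r e
    have e' : (t - r) • (b - a) = 0 := by
      rw [← sub_eq_zero.2 e]; module
    rcases smul_eq_zero.1 e' with h | h
    · linarith
    · exact absurd (sub_eq_zero.1 h).symm hab
  have f0 : a = (1 - (0 : ℝ)) • a + (0 : ℝ) • b := by simp
  have f1 : b = (1 - (1 : ℝ)) • a + (1 : ℝ) • b := by simp
  obtain ⟨γ, ec⟩ := par c hc
  obtain ⟨δ, ed⟩ := par d hd
  have hx0 : ori a b x = 0 := by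
    obtain ⟨s, t, hs, ht, hst, rfl⟩ := hx
    rw [ori_comb _ _ _ _ _ _ hst]; simp
  obtain ⟨t, ex⟩ := par x hx0
  have memcd : ∀ r : ℝ, (γ ≤ r ∧ r ≤ δ ∧ γ < δ ∨ δ ≤ r ∧ r ≤ γ ∧ δ < γ) →
      (1 - r) • a + r • b ∈ segment ℝ c d := by
    intro r hr
    rw [ec, ed]
    have hne : δ - γ ≠ 0 := by
      intro h
      rcases hr with h' | h' <;> linarith [h'.2.2]
    refine ⟨(δ - r) / (δ - γ), (r - γ) / (δ - γ), ?_, ?_, ?_, ?_⟩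
    · rcases hr with h | h
      · exact div_nonneg (by linarith) (by linarith)
      · exact div_nonneg_of_nonpos (by linarith) (by linarith)
    · rcases hr with h | h
      · exact div_nonneg (by linarith) (by linarith)
      · exact div_nonneg_of_nonpos (by linarith) (by linarith)
    · field_simp; ring
    · ext <;> simp <;> field_simp <;> ring
  have t0 : t ≠ 0 := by rintro rfl; exact na (ex.trans f0.symm)
  have t1 : t ≠ 1 := by rintro rfl; exact nb (ex.trans f1.symm)
  have tc : t ≠ γ := by rintro rfl; exact nc (ex.trans ec.symm)
  have td : t ≠ δ := by rintro rfl; exact nd (ex.trans ed.symm)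
  have ht : 0 ≤ t ∧ t ≤ 1 := by
    obtain ⟨s, r, hs, hr, hsr, e⟩ := hx
    obtain rfl : s = 1 - r := by linarith
    have := inj r t (e.trans ex)
    constructor <;> linarith
  have htc : γ ≤ t ∧ t ≤ δ ∨ δ ≤ t ∧ t ≤ γ := by
    obtain ⟨s, r, hs, hr, hsr, e⟩ := hx'
    obtain rfl : s = 1 - r := by linarith
    have e2 : (1 - ((1 - r) * γ + r * δ)) • a + ((1 - r) * γ + r * δ) • b = (1 - t) • a + t • b := by
      rw [← ex, ← e, ec, ed]; module
    have := inj _ _ e2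
    rcases le_total γ δ with h | h
    · left; constructor <;> nlinarith
    · right; constructor <;> nlinarith
  have jc : 0 ≤ γ → γ ≤ 1 → γ = 0 ∨ γ = 1 := by
    intro h0 h1
    have := mem _ h0 h1
    rw [← ec] at this
    rcases kc this with h | h
    · left; apply inj; rw [← ec, ← f0, h]
    · right; apply inj; rw [← ec, ← f1, h]
  have jd : 0 ≤ δ → δ ≤ 1 → δ = 0 ∨ δ = 1 := by
    intro h0 h1
    have := mem _ h0 h1
    rw [← ed] at this
    rcases kd this with h | h
    · left; apply inj; rw [← ed, ← f0, h]
    · right; apply inj; rw [← ed, ← f1, h]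
  have ja : (γ ≤ 0 ∧ 0 ≤ δ ∧ γ < δ ∨ δ ≤ 0 ∧ 0 ≤ γ ∧ δ < γ) → γ = 0 ∨ δ = 0 := by
    intro h
    have := memcd 0 h
    rw [← f0] at this
    rcases ka this with h | h
    · left; apply inj; rw [← ec, ← f0, h]
    · right; apply inj; rw [← ed, ← f0, h]
  have jb : (γ ≤ 1 ∧ 1 ≤ δ ∧ γ < δ ∨ δ ≤ 1 ∧ 1 ≤ γ ∧ δ < γ) → γ = 1 ∨ δ = 1 := by
    intro h
    have := memcd 1 h
    rw [← f1] at this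
    rcases kb this with h | h
    · left; apply inj; rw [← ec, ← f1, h]
    · right; apply inj; rw [← ed, ← f1, h]
  have fin : (γ = 0 ∧ δ = 1) ∨ (δ = 0 ∧ γ = 1) :=
    overlap_aux t0 t1 tc td ht htc jc jd ja jb
  rcases fin with ⟨rfl, rfl⟩ | ⟨rfl, rfl⟩
  · left; exact ⟨f0.trans ec.symm, f1.trans ed.symm⟩
  · right; exact ⟨f0.trans ed.symm, f1.trans ec.symm⟩

/-- A vertex on an edge is an endpoint. -/
theorem Tri.vert_edge (hT : Tri P K) {a b c z : Pt} (h : K a b c) (hz : z ∈ P)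
    (hzs : z ∈ segment ℝ a b) : z = a ∨ z = b := by
  have := seg_inTri (hT.pos h) hzs
  rcases hT.empt h hz this.1 with h1 | h1 | h1
  · exact Or.inl h1
  · exact Or.inr h1
  · subst h1
    have := hT.pos h
    linarith [this, (seg_inTri (hT.pos h) hzs).2]

theorem Tri.noncross (hT : Tri P K) {a b c a' b' c' x : Pt} (h : K a b c) (h' : K a' b' c')
    (hne : s(a, b) ≠ s(a', b')) (hx : x ∈ segment ℝ a b) (hx' : x ∈ segment ℝ a' b') :
    (x = a ∨ x = b) ∧ (x = a' ∨ x = b') := by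
  have ma := hT.mem h
  have mb := hT.mem (hT.rot h)
  have ma' := hT.mem h'
  have mb' := hT.mem (hT.rot h')
  have hp := hT.pos h
  have hp' := hT.pos h'
  by_cases hxa : x = a ∨ x = b
  · refine ⟨hxa, hT.vert_edge h' ?_ hx'⟩
    rcases hxa with rfl | rfl <;> assumption
  by_cases hxa' : x = a' ∨ x = b'
  · refine ⟨hT.vert_edge h ?_ hx, hxa'⟩
    rcases hxa' with rfl | rfl <;> assumption
  exfalso
  obtain ⟨nab, -, -⟩ := ori_ne_of_pos hp
  obtain ⟨nab', -, -⟩ := ori_ne_of_pos hp'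
  have hx0 := (seg_inTri hp hx).2
  rw [not_or] at hxa hxa'
  by_cases hcol : ori a b a' = 0 ∧ ori a b b' = 0
  · apply hne
    rw [Sym2.eq_iff]
    exact collinear_overlap nab hcol.1 hcol.2 hx hx' hxa.1 hxa.2 hxa'.1 hxa'.2
      (hT.vert_edge h ma') (hT.vert_edge h mb') (hT.vert_edge h' ma) (hT.vert_edge h' mb)
  · obtain ⟨w, hw, hwpos⟩ : ∃ w, w ∈ segment ℝ a' b' ∧ 0 < ori a b w := by
      obtain ⟨s, t, hs, ht, hst, rfl⟩ := hx'
      rw [ori_comb _ _ _ _ _ _ hst] at hx0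
      have hs' : 0 < s := by
        rcases hs.lt_or_eq with h | rfl
        · exact h
        · obtain rfl : t = 1 := by linarith
          simp at hxa'
      have ht' : 0 < t := by
        rcases ht.lt_or_eq with h | rfl
        · exact h
        · obtain rfl : s = 1 := by linarith
          simp at hxa'
      rcases lt_trichotomy (ori a b a') 0 with k | k | k
      · refine ⟨b', right_mem_segment _ _ _, ?_⟩
        by_contra hcon
        nlinarith
      · exfalso
        rw [k] at hx0 hcol
        simp [ht'.ne'] at hx0
        simp [hx0] at hcol
      · exact ⟨a', left_mem_segment _ _ _, k⟩
    -- `x` is in the open segment `ab`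
    have hin := (seg_inTri hp hx).1
    have hb : 0 < ori b c x := by
      rcases hin.2.1.lt_or_eq with k | k
      · exact k
      · exfalso
        have e := bary_eq hp x
        have e2 := ori_sum a b c x
        rw [hx0, ← k] at e e2
        have : ori c a x = ori a b c := by linarith
        rw [this, div_self hp.ne'] at e
        simp at e
        exact hxa.2 e
    have hc : 0 < ori c a x := by
      rcases hin.2.2.lt_or_eq with k | k
      · exact k
      · exfalso
        have e := bary_eq hp x
        have e2 := ori_sum a b c x
        rw [hx0, ← k] at e e2
        have : ori b c x = ori a b c := by linarith
        rw [this, div_self hp.ne'] at e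
        simp at e
        exact hxa.1 e
    obtain ⟨e, e0, e1, k1, k2, k3⟩ := small_eps 1 _ _ 1 (ori b c w) (ori c a w) one_pos hb hc
    have hy' : (1 - e) • x + e • w ∈ segment ℝ a' b' :=
      (convex_segment a' b') hx' hw (by linarith) e0.le (by ring)
    have hy : InTriO a b c ((1 - e) • x + e • w) := by
      refine ⟨?_, ?_, ?_⟩ <;> rw [ori_comb _ _ _ _ _ _ (by ring)]
      · rw [hx0]; simp; positivity
      · exact k2
      · exact k3
    have := hT.disj' h h' hy (seg_inTri hp' hy').1
    have hz := (seg_inTri hp' hy').2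
    rcases this with ⟨rfl, rfl, rfl⟩ | ⟨rfl, rfl, rfl⟩ | ⟨rfl, rfl, rfl⟩
    · exact hne rfl
    · exact hy.2.1.ne' hz
    · exact hy.2.2.ne' hz

theorem edges_cases {u v : Pt} (h : s(u, v) ∈ edges K) :
    ∃ a b c, K a b c ∧ s(u, v) = s(a, b) ∧ segment ℝ u v = segment ℝ a b := by
  obtain ⟨a, b, c, hK, he⟩ := h
  refine ⟨a, b, c, hK, he, ?_⟩
  rcases Sym2.eq_iff.1 he with ⟨rfl, rfl⟩ | ⟨rfl, rfl⟩
  · rfl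
  · exact segment_symm _ _ _

theorem Tri.valid (hT : Tri P K) : ValidSegs P (edges K) := by
  constructor
  · rintro e ⟨a, b, c, hK, rfl⟩
    exact ⟨a, b, hT.mem hK, hT.mem (hT.rot hK), (ori_ne_of_pos (hT.pos hK)).1, rfl⟩
  · rintro u v u' v' h h' hne ⟨x, hx, hx', hn⟩
    obtain ⟨a, b, c, hK, he, hs⟩ := edges_cases h
    obtain ⟨a', b', c', hK', he', hs'⟩ := edges_cases h'
    rw [hs] at hx
    rw [hs'] at hx'
    rw [he, he'] at hne
    have := hT.noncross hK hK' hne hx hx'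
    apply hn
    rw [Sym2.eq_iff] at he he'
    grind

theorem Tri.maximal (hT : Tri P K) (T' : Set (Sym2 Pt)) (hv : ValidSegs P T') (hsub : edges K ⊆ T') :
    T' = edges K := by
  refine Subset.antisymm ?_ hsub
  intro e he
  obtain ⟨u, v, hu, hv', huv, rfl⟩ := hv.1 e he
  by_contra hnot
  have hcr : ∀ a b : Pt, s(a, b) ∈ edges K → ∀ x, x ∈ segment ℝ u v → x ∈ segment ℝ a b →
      x ≠ u → x ≠ v → False := by
    intro a b hab x hx hx' h1 h2
    refine hv.2 u v a b he (hsub hab) ?_ ⟨x, hx, hx', ?_⟩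
    · intro h; rw [h] at hnot; exact hnot hab
    · rintro ⟨h | h, -⟩ <;> contradiction
  have hmemu : ∀ t : ℝ, 0 ≤ t → t ≤ 1 → (1 - t) • u + t • v ∈ segment ℝ u v :=
    fun t h0 h1 => ⟨1 - t, t, by linarith, h0, by ring, rfl⟩
  have hneu : ∀ t : ℝ, 0 < t → (1 - t) • u + t • v ≠ u := by
    intro t ht h
    have : t • (v - u) = 0 := by rw [← sub_eq_zero.2 h]; module
    rcases smul_eq_zero.1 this with h | h
    · exact ht.ne' h
    · exact huv (sub_eq_zero.1 h).symm
  have hnev : ∀ t : ℝ, t < 1 → (1 - t) • u + t • v ≠ v := by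
    intro t ht h
    have : (1 - t) • (u - v) = 0 := by rw [← sub_eq_zero.2 h]; module
    rcases smul_eq_zero.1 this with h | h
    · linarith
    · exact huv (sub_eq_zero.1 h)
  -- a triangle at `u`
  obtain ⟨t, t0, t1, a, b, c, hK, hx, hua⟩ : ∃ t : ℝ, 0 < t ∧ t < 1 ∧ ∃ a b c, K a b c ∧
      InTri a b c ((1 - t) • u + t • v) ∧ InTri a b c u := by
    have h0 : ∀ᶠ e in nhdsWithin (0 : ℝ) (Ioi 0), 0 < e := self_mem_nhdsWithin
    have h1' : ∀ᶠ e in nhdsWithin (0 : ℝ) (Ioi 0), e < 1 :=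
      (eventually_lt_nhds (by norm_num : (0 : ℝ) < 1)).filter_mono nhdsWithin_le_nhds
    have h2 : ∀ᶠ e in nhdsWithin (0 : ℝ) (Ioi 0), ∀ w ∈ (P ×ˢ P ×ˢ P : Finset (Pt × Pt × Pt)),
        ¬ InTri w.1 w.2.1 w.2.2 u → ¬ InTri w.1 w.2.1 w.2.2 ((1 - e) • u + e • v) := by
      rw [Filter.eventually_all_finset]
      intro w _
      by_cases hw : InTri w.1 w.2.1 w.2.2 u
      · exact Filter.Eventually.of_forall fun e h => absurd hw h
      · have hc : Continuous (fun e : ℝ => (1 - e) • u + e • v) := by fun_prop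
        have : ∀ᶠ e in nhds (0 : ℝ), (1 - e) • u + e • v ∈ {x | InTri w.1 w.2.1 w.2.2 x}ᶜ := by
          apply hc.continuousAt.eventually_mem
          apply (isClosed_inTri _ _ _).isOpen_compl.mem_nhds
          simpa using hw
        exact (this.filter_mono nhdsWithin_le_nhds).mono fun e h _ => h
    obtain ⟨t, t0, t1, h⟩ := (h0.and (h1'.and h2)).exists
    have hcv : (1 - t) • u + t • v ∈ convexHull ℝ (P : Set Pt) :=
      (convex_convexHull ℝ _).segment_subset (subset_convexHull ℝ _ hu) (subset_convexHull ℝ _ hv')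
        (hmemu t t0.le t1.le)
    obtain ⟨a, b, c, hK, hin⟩ := hT.cover hcv
    refine ⟨t, t0, t1, a, b, c, hK, hin, ?_⟩
    by_contra hcon
    refine h (a, b, c) ?_ hcon hin
    simp only [Finset.mem_product]
    exact ⟨hT.mem hK, hT.mem (hT.rot hK), hT.mem (hT.rot (hT.rot hK))⟩
  -- rotate so that `u = a`
  obtain ⟨b, c, hK, hx⟩ : ∃ b c, K u b c ∧ InTri u b c ((1 - t) • u + t • v) := by
    rcases hT.empt hK hu hua with rfl | rfl | rfl
    · exact ⟨b, c, hK, hx⟩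
    · exact ⟨c, a, hT.rot hK, hx.rot⟩
    · exact ⟨a, b, hT.rot (hT.rot hK), hx.rot.rot⟩
  clear hua
  have hp := hT.pos hK
  have e1 : ori b c u = ori u b c := ori_rot u b c
  have e2 : ori c u b = ori u b c := by rw [ori_rot, ori_rot]
  have K1 : s(u, b) ∈ edges K := ⟨u, b, c, hK, rfl⟩
  have K2 : s(b, c) ∈ edges K := ⟨b, c, u, hT.rot hK, rfl⟩
  have K3 : s(c, u) ∈ edges K := ⟨c, u, b, hT.rot (hT.rot hK), rfl⟩
  have o1 : ori u b ((1 - t) • u + t • v) = t * ori u b v := by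
    rw [ori_comb _ _ _ _ _ _ (by ring)]; simp
  have o2 : ori c u ((1 - t) • u + t • v) = t * ori c u v := by
    rw [ori_comb _ _ _ _ _ _ (by ring)]; simp
  have g1 : 0 ≤ ori u b v := by
    have := hx.1; rw [o1] at this; exact nonneg_of_mul_nonneg_right this t0
  have g2 : 0 ≤ ori c u v := by
    have := hx.2.2; rw [o2] at this; exact nonneg_of_mul_nonneg_right this t0
  rcases g1.lt_or_eq with g1 | g1
  swap
  · exact hcr u b K1 _ (hmemu t t0.le t1.le)
      (mem_segment_of_ori hp (by rw [o1, ← g1, mul_zero]) hx.2.1 hx.2.2) (hneu t t0) (hnev t t1)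
  rcases g2.lt_or_eq with g2 | g2
  swap
  · exact hcr c u K3 _ (hmemu t t0.le t1.le)
      (mem_segment_of_ori (c := b) (by rw [e2]; exact hp) (by rw [o2, ← g2, mul_zero]) hx.1 hx.2.1)
      (hneu t t0) (hnev t t1)
  have g3 : ori b c v < 0 := by
    by_contra hcon
    rcases hT.empt hK hv' ⟨g1.le, not_lt.1 hcon, g2.le⟩ with rfl | rfl | rfl
    · exact huv rfl
    · simp at g1
    · simp at g2
  have hden : 0 < ori u b c - ori b c v := by linarith
  set r := ori u b c / (ori u b c - ori b c v) with hr
  have r0 : 0 < r := by positivity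
  have r1 : r < 1 := by rw [hr, div_lt_one hden]; linarith
  have hy0 : ori b c ((1 - r) • u + r • v) = 0 := by
    rw [ori_comb _ _ _ _ _ _ (by ring), e1, hr]; field_simp; ring
  refine hcr b c K2 _ (hmemu r r0.le r1.le)
      (mem_segment_of_ori (c := u) (by rw [e1]; exact hp) hy0 ?_ ?_) (hneu r r0) (hnev r r1)
  · rw [ori_comb _ _ _ _ _ _ (by ring)]; simp; positivity
  · rw [ori_comb _ _ _ _ _ _ (by ring)]; simp; positivity

theorem Tri.isTriangulation (hT : Tri P K) : IsTriangulation P (edges K) :=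
  ⟨hT.valid, hT.maximal⟩

theorem convex_inTriO (a b c : Pt) : Convex ℝ {x | InTriO a b c x} := by
  intro y hy z hz s t hs ht hst
  obtain ⟨y1, y2, y3⟩ := hy
  obtain ⟨z1, z2, z3⟩ := hz
  have key : ∀ p q : ℝ, 0 < p → 0 < q → 0 < s * p + t * q := by
    intro p q hp hq
    rcases hs.lt_or_eq with h | h
    · have := mul_nonneg ht hq.le
      have := mul_pos h hp
      linarith
    · have : t = 1 := by linarith
      subst this; rw [← h]; linarith
  refine ⟨?_, ?_, ?_⟩ <;> rw [ori_comb _ _ _ _ _ _ hst] <;> apply key <;> assumption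

theorem Tri.isTriangle_iff (hT : Tri P K) {a b c : Pt} :
    (IsTriangleOf P (edges K) a b c ∧ 0 < ori a b c) ↔ K a b c := by
  constructor
  · rintro ⟨⟨ma, mb, mc, -, -, -, -, -, -, -, hseg⟩, hp⟩
    simp only [mem_openTriangle hp] at hseg
    obtain ⟨g, hg⟩ := centroid_inTriO hp
    have hgc : g ∈ convexHull ℝ (P : Set Pt) := by
      refine convexHull_mono ?_ (inTri_convexHull hp hg.le)
      intro z hz
      simp only [mem_insert_iff, mem_singleton_iff] at hz
      rcases hz with rfl | rfl | rfl <;> assumption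
    obtain ⟨a', b', c', hK, hg'⟩ := hT.cover hgc
    have hp' := hT.pos hK
    obtain ⟨y, y1, y2⟩ := open_meet hp' hg hg'
    have hsub : {x | InTriO a b c x} ⊆ {x | InTriO a' b' c' x} := by
      refine (convex_inTriO a b c).isPreconnected.subset_left_of_subset_union
        (isOpen_inTriO a' b' c') (isClosed_inTri a' b' c').isOpen_compl ?_ ?_ ⟨y, y1, y2⟩
      · rw [disjoint_compl_right_iff_subset]
        intro x hx; exact hx.le
      · intro x hx
        by_cases hin : InTri a' b' c' x
        · left
          obtain ⟨i1, i2, i3⟩ := hin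
          have e1 : ori b' c' a' = ori a' b' c' := ori_rot _ _ _
          have e2 : ori c' a' b' = ori a' b' c' := by rw [ori_rot, ori_rot]
          refine ⟨lt_of_le_of_ne i1 ?_, lt_of_le_of_ne i2 ?_, lt_of_le_of_ne i3 ?_⟩
          · intro h0
            exact hseg a' b' ⟨a', b', c', hK, rfl⟩ x (mem_segment_of_ori hp' h0.symm i2 i3) hx
          · intro h0
            exact hseg b' c' ⟨b', c', a', hT.rot hK, rfl⟩ x
              (mem_segment_of_ori (by rw [e1]; exact hp') h0.symm i3 i1) hx
          · intro h0
            exact hseg c' a' ⟨c', a', b', hT.rot (hT.rot hK), rfl⟩ x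
              (mem_segment_of_ori (by rw [e2]; exact hp') h0.symm i1 i2) hx
        · right; exact hin
    have hvert : ∀ z, InTri a b c z → InTri a' b' c' z := by
      intro z hz
      have hcl : z ∈ closure {x | InTriO a b c x} := by
        have hc : Continuous (fun e : ℝ => (1 - e) • z + e • g) := by fun_prop
        have ht : Filter.Tendsto (fun e : ℝ => (1 - e) • z + e • g) (nhdsWithin 0 (Ioi 0)) (nhds z) := by
          have := hc.tendsto 0
          simp only [sub_zero, one_smul, zero_smul, add_zero] at this
          exact this.mono_left nhdsWithin_le_nhds
        refine mem_closure_of_tendsto ht ?_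
        have h0 : ∀ᶠ e in nhdsWithin (0 : ℝ) (Ioi 0), 0 < e := self_mem_nhdsWithin
        have h1' : ∀ᶠ e in nhdsWithin (0 : ℝ) (Ioi 0), e < 1 :=
          (eventually_lt_nhds (by norm_num : (0 : ℝ) < 1)).filter_mono nhdsWithin_le_nhds
        filter_upwards [h0, h1'] with e he0 he1
        obtain ⟨z1, z2, z3⟩ := hz
        obtain ⟨g1, g2, g3⟩ := hg
        have he : 0 ≤ 1 - e := by linarith
        refine ⟨?_, ?_, ?_⟩ <;> rw [ori_comb _ _ _ _ _ _ (by ring)] <;> positivity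
      have := closure_mono hsub hcl
      have h2 : closure {x | InTriO a' b' c' x} ⊆ {x | InTri a' b' c' x} :=
        closure_minimal (fun x hx => InTriO.le hx) (isClosed_inTri _ _ _)
      exact h2 this
    have e1 : ori b c a = ori a b c := ori_rot a b c
    have e2 : ori c a b = ori a b c := by rw [ori_rot, ori_rot]
    have va := hT.empt hK ma (hvert a ⟨by simp, by rw [e1]; exact hp.le, by simp⟩)
    have vb := hT.empt hK mb (hvert b ⟨by simp, by simp, by rw [e2]; exact hp.le⟩)
    have vc := hT.empt hK mc (hvert c ⟨hp.le, by simp, by simp⟩)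
    have K2 := hT.rot hK
    have K3 := hT.rot K2
    have s1 := ori_swap a' b' c'
    have s2 := ori_swap b' c' a'
    have s3 := ori_swap c' a' b'
    have p2 := hT.pos K2
    have p3 := hT.pos K3
    rcases va with rfl | rfl | rfl <;> rcases vb with rfl | rfl | rfl <;>
      rcases vc with rfl | rfl | rfl <;> first | assumption | (exfalso; simp at hp) | (exfalso; linarith)
  · intro hK
    have hp := hT.pos hK
    have K2 := hT.rot hK
    have K3 := hT.rot K2
    obtain ⟨n1, n2, n3⟩ := ori_ne_of_pos hp
    refine ⟨⟨hT.mem hK, hT.mem K2, hT.mem K3, n1, n2, n3, ⟨a, b, c, hK, rfl⟩, ⟨b, c, a, K2, rfl⟩,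
      ⟨c, a, b, K3, Sym2.eq_swap⟩, ?_, ?_⟩, hp⟩
    · intro z hz hzo
      rw [mem_openTriangle hp] at hzo
      obtain ⟨z1, z2, z3⟩ := hzo
      rcases hT.empt hK hz ⟨z1.le, z2.le, z3.le⟩ with rfl | rfl | rfl
      · simp at z1
      · simp at z1
      · simp at z2
    · intro u v huv x hx hxo
      rw [mem_openTriangle hp] at hxo
      obtain ⟨a', b', c', hK', he, hs⟩ := edges_cases huv
      rw [hs] at hx
      have hx' := seg_inTri (hT.pos hK') hx
      obtain ⟨z1, z2, z3⟩ := hxo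
      rcases hT.disj' hK hK' ⟨z1, z2, z3⟩ hx'.1 with ⟨rfl, rfl, rfl⟩ | ⟨rfl, rfl, rfl⟩ | ⟨rfl, rfl, rfl⟩
      · exact z1.ne' hx'.2
      · exact z2.ne' hx'.2
      · exact z3.ne' hx'.2

theorem isTriangleOf_swap {T : Set (Sym2 Pt)} {a b c : Pt} (h : IsTriangleOf P T a b c) :
    IsTriangleOf P T a c b := by
  obtain ⟨m1, m2, m3, n1, n2, n3, t1, t2, t3, u1, u2⟩ := h
  rw [openTriangle_swap] at u1 u2
  exact ⟨m1, m3, m2, n3, n2.symm, n1, t3, by rw [Sym2.eq_swap]; exact t2, t1, u1, u2⟩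

theorem Tri.isTriangle_iff' (hT : Tri P K) {a b c : Pt} :
    (IsTriangleOf P (edges K) a b c ∧ Clockwise a b c) ↔ K a c b := by
  rw [← hT.isTriangle_iff, clockwise_iff]
  constructor <;> rintro ⟨h1, h2⟩ <;> exact ⟨isTriangleOf_swap h1, h2⟩

end

/-! ### The cyclic order of the convex hull points -/

theorem cone_cover {m : ℕ} [NeZero m] (v : ZMod m → Pt) (q x : Pt)
    (hv : ∀ i, 0 < ori q (v i) (v (i + 1))) :
    ∃ i, 0 ≤ ori q (v i) x ∧ 0 ≤ ori q x (v (i + 1)) := by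
  by_contra hcon
  push Not at hcon
  have step : ∀ i, 0 ≤ ori q (v i) x → 0 < ori q (v (i + 1)) x := by
    intro i hi
    have := hcon i hi
    rw [ori_swap] at this; linarith
  have hpos : ∀ i, 0 < ori q (v i) x * ori q (v (i + 1)) x := by
    by_cases hex : ∃ i, 0 ≤ ori q (v i) x
    · obtain ⟨i0, h0⟩ := hex
      have hn : ∀ n : ℕ, 0 ≤ ori q (v (i0 + n)) x := by
        intro n
        induction n with
        | zero => simpa using h0
        | succ n ih =>
          have := step _ ih
          rw [add_assoc] at this
          push_cast
          exact this.le
      have hall : ∀ i, 0 ≤ ori q (v i) x := by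
        intro i
        have := hn (i - i0).val
        rw [ZMod.natCast_zmod_val] at this
        simpa using this
      have hall' : ∀ i, 0 < ori q (v i) x := by
        intro i
        have := step _ (hall (i - 1))
        simpa using this
      exact fun i => mul_pos (hall' _) (hall' _)
    · push Not at hex
      exact fun i => mul_pos_of_neg_of_neg (hex _) (hex _)
  let d : ZMod m → ℝ := fun i => ((v i).1 - q.1) * (x.1 - q.1) + ((v i).2 - q.2) * (x.2 - q.2)
  obtain ⟨i, -, hi⟩ := Finset.exists_max_image (Finset.univ : Finset (ZMod m))
    (fun i => d i / ori q (v i) x) ⟨0, Finset.mem_univ _⟩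
  have h1 := hi (i + 1) (Finset.mem_univ _)
  have h2 := hpos i
  have hx : 0 < (x.1 - q.1) ^ 2 + (x.2 - q.2) ^ 2 := by
    by_contra hx
    have e1 : x.1 - q.1 = 0 := by nlinarith [sq_nonneg (x.1 - q.1), sq_nonneg (x.2 - q.2)]
    have e2 : x.2 - q.2 = 0 := by nlinarith [sq_nonneg (x.1 - q.1), sq_nonneg (x.2 - q.2)]
    unfold ori at h2
    rw [e1, e2] at h2
    simp at h2
  have key : ori q (v i) (v (i + 1)) * ((x.1 - q.1) ^ 2 + (x.2 - q.2) ^ 2) =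
      d (i + 1) * ori q (v i) x - d i * ori q (v (i + 1)) x := by
    simp only [d]; unfold ori; ring
  have h3 := mul_pos (hv i) hx
  rw [key] at h3
  have n1 : ori q (v i) x ≠ 0 := left_ne_zero_of_mul h2.ne'
  have n2 : ori q (v (i + 1)) x ≠ 0 := right_ne_zero_of_mul h2.ne'
  have h4 : d (i + 1) / ori q (v (i + 1)) x - d i / ori q (v i) x =
      (d (i + 1) * ori q (v i) x - d i * ori q (v (i + 1)) x) / (ori q (v i) x * ori q (v (i + 1)) x) := by
    field_simp
  have h5 := div_pos h3 h2
  rw [← h4] at h5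
  linarith

/-- Cyclic counterclockwise enumeration of the convex hull points of `P`. -/
structure Cyc (P : Finset Pt) (m : ℕ) (h : ZMod m → Pt) : Prop where
  inj : Function.Injective h
  mem : ∀ i, h i ∈ P
  ne : ∀ i, h i ≠ h (i + 1)
  left : ∀ i, ∀ z ∈ P, 0 ≤ ori (h i) (h (i + 1)) z
  seg : ∀ i, ∀ z ∈ P, z ∈ segment ℝ (h i) (h (i + 1)) → z = h i ∨ z = h (i + 1)
  hull : ∀ z ∈ P, z ∈ interior (convexHull ℝ (P : Set Pt)) ∨ ∃ i, z = h i

theorem edge_point {q a b x : Pt} (hp : 0 < ori q a b) (hx : x ≠ q) (h1 : 0 ≤ ori q a x)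
    (h2 : 0 ≤ ori q x b) : ∃ c : ℝ, 0 < c ∧ (1 - c) • q + c • x ∈ segment ℝ a b := by
  have h2' : ori b q x = ori q x b := by unfold ori; ring
  have hA : 0 < ori q a x + ori q x b := by
    rcases (add_nonneg h1 h2).lt_or_eq with h | h
    · exact h
    · exfalso
      have z1 : ori q a x = 0 := by linarith
      have z2 : ori q x b = 0 := by linarith
      have e := bary_eq hp x
      have e3 := ori_sum q a b x
      rw [h2', z1, z2] at e
      rw [h2', z1, z2] at e3
      have : ori a b x = ori q a b := by linarith
      rw [this, div_self hp.ne'] at e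
      simp at e
      exact hx e
  refine ⟨ori q a b / (ori q a x + ori q x b), by positivity, ?_⟩
  refine ⟨ori q x b / (ori q a x + ori q x b), ori q a x / (ori q a x + ori q x b),
    by positivity, by positivity, by field_simp; ring, ?_⟩
  ext
  · simp only [Prod.fst_add, Prod.smul_fst, smul_eq_mul]
    field_simp
    unfold ori; ring
  · simp only [Prod.snd_add, Prod.smul_snd, smul_eq_mul]
    field_simp
    unfold ori; ring

section
variable {P : Finset Pt} {m : ℕ} {h : ZMod m → Pt}

theorem Cyc.pos_of_interior (hC : Cyc P m h) {q : Pt}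
    (hq : q ∈ interior (convexHull ℝ (P : Set Pt))) (i : ZMod m) : 0 < ori (h i) (h (i + 1)) q :=
  ori_pos_interior (hC.ne i) (fun _ hz => ori_nonneg_convexHull (hC.left i) hz) hq

theorem Cyc.pos_of_interior' (hC : Cyc P m h) {q : Pt}
    (hq : q ∈ interior (convexHull ℝ (P : Set Pt))) (i : ZMod m) : 0 < ori q (h i) (h (i + 1)) := by
  have := hC.pos_of_interior hq i
  rwa [ori_rot] at this

theorem Cyc.not_interior (hC : Cyc P m h) (i : ZMod m) :
    h i ∉ interior (convexHull ℝ (P : Set Pt)) := by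
  intro hq
  have := hC.pos_of_interior hq i
  simp at this

theorem Cyc.cone_eq (hC : Cyc P m h) {q : Pt}
    (hq : q ∈ interior (convexHull ℝ (P : Set Pt))) {x : Pt} (hx : x ≠ q) {i j : ZMod m}
    (i1 : 0 ≤ ori q (h i) x) (i2 : 0 ≤ ori q x (h (i + 1)))
    (j1 : 0 ≤ ori q (h j) x) (j2 : 0 ≤ ori q x (h (j + 1))) :
    i = j ∨ (j = i + 1 ∧ ori q (h j) x = 0) ∨ (i = j + 1 ∧ ori q (h i) x = 0) := by
  have conv : ∀ k, segment ℝ (h k) (h (k + 1)) ⊆ convexHull ℝ (P : Set Pt) := fun k =>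
    (convex_convexHull ℝ _).segment_subset (subset_convexHull ℝ _ (hC.mem k))
      (subset_convexHull ℝ _ (hC.mem (k + 1)))
  obtain ⟨c, c0, hc⟩ := edge_point (hC.pos_of_interior' hq i) hx i1 i2
  obtain ⟨d, d0, hd⟩ := edge_point (hC.pos_of_interior' hq j) hx j1 j2
  have zero : ∀ k y, y ∈ segment ℝ (h k) (h (k + 1)) → ori (h k) (h (k + 1)) y = 0 := by
    rintro k y ⟨s, t, -, -, hst, rfl⟩
    rw [ori_comb _ _ _ _ _ _ hst]; simp
  have key : ∀ k (c d : ℝ), 0 < c → 0 < d →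
      (1 - c) • q + c • x ∈ convexHull ℝ (P : Set Pt) →
      (1 - d) • q + d • x ∈ segment ℝ (h k) (h (k + 1)) → c ≤ d := by
    intro k c d c0 d0 h1 h2
    have h3 := ori_nonneg_convexHull (hC.left k) h1
    have h4 := zero k _ h2
    rw [ori_comb _ _ _ _ _ _ (by ring)] at h3 h4
    have h5 := hC.pos_of_interior hq k
    by_contra hcon
    push Not at hcon
    nlinarith
  have hcd : c = d := le_antisymm (key j c d c0 d0 (conv i hc) hd) (key i d c d0 c0 (conv j hd) hc)
  subst hcd
  set y := (1 - c) • q + c • x with hy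
  have hyo : ∀ k, y = h k → ori q (h k) x = 0 := by
    intro k hk
    have e : ori q (h k) y = c * ori q (h k) x := by
      rw [hy, ori_comb _ _ _ _ _ _ (by ring)]; simp
    rw [hk] at e
    simp at e
    rcases e with e | e
    · exact absurd e c0.ne'
    · exact e
  by_cases y1 : y = h i
  · rcases hC.seg j _ (hC.mem i) (y1 ▸ hd) with e | e
    · exact Or.inl (hC.inj e)
    · exact Or.inr (Or.inr ⟨hC.inj e, hyo _ y1⟩)
  by_cases y2 : y = h (i + 1)
  · rcases hC.seg j _ (hC.mem _) (y2 ▸ hd) with e | e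
    · have := hC.inj e
      exact Or.inr (Or.inl ⟨this.symm, hyo _ (this ▸ y2)⟩)
    · exact Or.inl (add_right_cancel (hC.inj e))
  by_cases y3 : y = h j
  · rcases hC.seg i _ (hC.mem j) (y3 ▸ hc) with e | e
    · exact Or.inl (hC.inj e).symm
    · exact Or.inr (Or.inl ⟨hC.inj e, hyo _ y3⟩)
  by_cases y4 : y = h (j + 1)
  · rcases hC.seg i _ (hC.mem _) (y4 ▸ hc) with e | e
    · have := hC.inj e
      exact Or.inr (Or.inr ⟨this.symm, hyo _ (this ▸ y4)⟩)
    · exact Or.inl (add_right_cancel (hC.inj e)).symm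
  left
  have hz := zero i y hc
  have hz2 : ori (h i) (h (i + 1)) (h j) = 0 ∧ ori (h i) (h (i + 1)) (h (j + 1)) = 0 := by
    have l1 := hC.left i _ (hC.mem j)
    have l2 := hC.left i _ (hC.mem (j + 1))
    obtain ⟨s, t, hs, ht, hst, e⟩ := hd
    rw [← e, ori_comb _ _ _ _ _ _ hst] at hz
    have hs' : 0 < s := by
      rcases hs.lt_or_eq with k | rfl
      · exact k
      · obtain rfl : t = 1 := by linarith
        simp at e
        exact absurd e.symm y4
    have ht' : 0 < t := by
      rcases ht.lt_or_eq with k | rfl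
      · exact k
      · obtain rfl : s = 1 := by linarith
        simp at e
        exact absurd e.symm y3
    constructor
    · nlinarith [mul_nonneg hs l1, mul_nonneg ht l2]
    · nlinarith [mul_nonneg hs l1, mul_nonneg ht l2]
  rcases collinear_overlap (hC.ne i) hz2.1 hz2.2 hc hd y1 y2 y3 y4 (hC.seg i _ (hC.mem _))
    (hC.seg i _ (hC.mem _)) (hC.seg j _ (hC.mem _)) (hC.seg j _ (hC.mem _)) with ⟨e, -⟩ | ⟨e1, e2⟩
  · exact hC.inj e
  · exfalso
    have p1 := hC.pos_of_interior' hq i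
    have p2 := hC.pos_of_interior' hq j
    rw [← e1, ← e2, ori_swap] at p2
    linarith

end

theorem exists_succ {P : Finset Pt} {q a : Pt} (hqP : q ∈ P) (haP : a ∈ P)
    (hq : q ∈ interior (convexHull ℝ (P : Set Pt)))
    (ha : a ∉ interior (convexHull ℝ (P : Set Pt))) :
    ∃ b ∈ P, a ≠ b ∧ (∀ z ∈ P, 0 ≤ ori a b z) ∧
      (∀ z ∈ P, z ∈ segment ℝ a b → z = a ∨ z = b) := by
  -- a supporting functional
  obtain ⟨n1, n2, hn, hnq⟩ : ∃ n1 n2 : ℝ,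
      (∀ z ∈ P, 0 ≤ n1 * (z.1 - a.1) + n2 * (z.2 - a.2)) ∧
      0 < n1 * (q.1 - a.1) + n2 * (q.2 - a.2) := by
    have hcv := convex_convexHull ℝ (P : Set Pt)
    obtain ⟨f, hf⟩ := geometric_hahn_banach_open_point hcv.interior isOpen_interior ha
    have hf' : ∀ z : Pt, f z = f (1, 0) * z.1 + f (0, 1) * z.2 := by
      intro z
      have : z = z.1 • ((1 : ℝ), (0 : ℝ)) + z.2 • ((0 : ℝ), (1 : ℝ)) := by ext <;> simp
      conv_lhs => rw [this]
      rw [map_add, map_smul, map_smul, smul_eq_mul, smul_eq_mul]; ring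
    refine ⟨- f (1, 0), - f (0, 1), ?_, ?_⟩
    · intro z hz
      have hz' : z ∈ closure (interior (convexHull ℝ (P : Set Pt))) := by
        rw [hcv.closure_interior_eq_closure_of_nonempty_interior ⟨q, hq⟩]
        exact subset_closure (subset_convexHull ℝ _ hz)
      have : f z ≤ f a :=
        closure_minimal (fun x hx => (hf x hx).le) (isClosed_le f.continuous continuous_const) hz'
      rw [hf' z, hf' a] at this
      linarith
    · have := hf q hq
      rw [hf' q, hf' a] at this
      linarith
  have hN : 0 < n1 ^ 2 + n2 ^ 2 := by
    by_contra hcon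
    have e1 : n1 = 0 := by nlinarith [sq_nonneg n1, sq_nonneg n2]
    have e2 : n2 = 0 := by nlinarith [sq_nonneg n1, sq_nonneg n2]
    rw [e1, e2] at hnq; simp at hnq
  set w : Pt → ℝ := fun z => n1 * (z.1 - a.1) + n2 * (z.2 - a.2) with hw
  set u : Pt → ℝ := fun z => n2 * (z.1 - a.1) - n1 * (z.2 - a.2) with hu
  have huw : ∀ b z, u b * w z - w b * u z = (n1 ^ 2 + n2 ^ 2) * ori a b z := by
    intro b z; simp only [hu, hw]; unfold ori; ring
  have hua : u a = 0 := by simp [hu]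
  have hwa : w a = 0 := by simp [hw]
  obtain ⟨b, hbP, hab, hb⟩ : ∃ b ∈ P, a ≠ b ∧ (∀ z ∈ P, 0 ≤ u b * w z - w b * u z) := by
    by_cases hex : ∃ b ∈ P, w b = 0 ∧ 0 < u b
    · obtain ⟨b, hbP, hb1, hb2⟩ := hex
      refine ⟨b, hbP, ?_, ?_⟩
      · rintro rfl; rw [hua] at hb2; exact lt_irrefl _ hb2
      · intro z hz
        have := hn z hz
        rw [hb1]; simp only [zero_mul, sub_zero]
        exact mul_nonneg hb2.le this
    · push Not at hex
      obtain ⟨b, hb, hmax⟩ := Finset.exists_max_image (P.filter (fun z => 0 < w z))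
        (fun z => u z / w z) ⟨q, by simp only [Finset.mem_filter]; exact ⟨hqP, hnq⟩⟩
      rw [Finset.mem_filter] at hb
      refine ⟨b, hb.1, ?_, ?_⟩
      · rintro rfl; rw [hwa] at hb; exact lt_irrefl _ hb.2
      · intro z hz
        rcases (hn z hz).lt_or_eq with h | h
        · have h1 := hmax z (Finset.mem_filter.2 ⟨hz, h⟩)
          change 0 < w z at h
          rw [div_le_div_iff₀ h hb.2] at h1
          linarith
        · have h' : w z = 0 := h.symm
          have := hex z hz h'
          rw [h', mul_zero, zero_sub]
          have := mul_nonneg hb.2.le (sub_nonneg.2 this)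
          linarith
  have hb' : ∀ z ∈ P, 0 ≤ ori a b z := by
    intro z hz
    have := hb z hz
    rw [huw] at this
    exact nonneg_of_mul_nonneg_right this hN
  classical
  obtain ⟨c, hc, hmin⟩ := Finset.exists_min_image (P.filter (fun z => z ≠ a ∧ z ∈ segment ℝ a b))
    (fun z => dist z a) ⟨b, by
      rw [Finset.mem_filter]; exact ⟨hbP, hab.symm, right_mem_segment _ _ _⟩⟩
  rw [Finset.mem_filter] at hc
  obtain ⟨hcP, hca, hcs⟩ := hc
  refine ⟨c, hcP, hca.symm, ?_, ?_⟩
  · intro z hz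
    obtain ⟨s, t, hs, ht, hst, rfl⟩ := hcs
    have : ori a (s • a + t • b) z = t * ori a b z := by
      obtain rfl : s = 1 - t := by linarith
      unfold ori
      simp only [Prod.fst_add, Prod.snd_add, Prod.smul_fst, Prod.smul_snd, smul_eq_mul]
      ring
    rw [this]
    exact mul_nonneg ht (hb' z hz)
  · intro z hz hzs
    by_cases hza : z = a
    · exact Or.inl hza
    right
    have hzb : z ∈ segment ℝ a b :=
      (convex_segment a b).segment_subset (left_mem_segment _ _ _) hcs hzs
    have h1 := hmin z (Finset.mem_filter.2 ⟨hz, hza, hzb⟩)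
    obtain ⟨s, t, hs, ht, hst, rfl⟩ := hzs
    obtain rfl : s = 1 - t := by linarith
    simp only [dist_eq_norm] at h1
    have e : (1 - t) • a + t • c - a = t • (c - a) := by module
    rw [e, norm_smul, Real.norm_of_nonneg ht] at h1
    have h2 : 0 < ‖c - a‖ := norm_pos_iff.2 (sub_ne_zero.2 hca)
    have : t = 1 := by
      apply le_antisymm (by linarith)
      by_contra hcon
      push Not at hcon
      nlinarith
    subst this
    simp

theorem exists_hull_point {P : Finset Pt} (hne : P.Nonempty) :
    ∃ a ∈ P, a ∉ interior (convexHull ℝ (P : Set Pt)) := by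
  obtain ⟨a, ha, hmax⟩ := Finset.exists_max_image P (fun z => z.1) hne
  refine ⟨a, ha, fun hInt => ?_⟩
  have huv : ((a.1, 0) : Pt) ≠ (a.1, 1) := by simp
  have := ori_pos_interior huv (S := convexHull ℝ (P : Set Pt)) (fun z hz => ?_) hInt
  · unfold ori at this; simp at this
  · refine ori_nonneg_convexHull ?_ hz
    intro z hz
    have := hmax z hz
    unfold ori; simpa using this

theorem exists_cyc {P : Finset Pt} {q : Pt} (hqP : q ∈ P)
    (hq : q ∈ interior (convexHull ℝ (P : Set Pt))) :
    ∃ (m : ℕ) (_ : NeZero m) (h : ZMod m → Pt), Cyc P m h := by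
  let H : Type := {a : Pt // a ∈ P ∧ a ∉ interior (convexHull ℝ (P : Set Pt))}
  have hs : ∀ a : H, ∃ b : H, a.1 ≠ b.1 ∧ (∀ z ∈ P, 0 ≤ ori a.1 b.1 z) ∧
      (∀ z ∈ P, z ∈ segment ℝ a.1 b.1 → z = a.1 ∨ z = b.1) := by
    rintro ⟨a, ha, ha'⟩
    obtain ⟨b, hb, h1, h2, h3⟩ := exists_succ hqP ha hq ha'
    refine ⟨⟨b, hb, fun hInt => ?_⟩, h1, h2, h3⟩
    have := ori_pos_interior h1 (fun z hz => ori_nonneg_convexHull h2 hz) hInt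
    simp at this
  choose σ hσ1 hσ2 hσ3 using hs
  have hfin : Finite H := by
    have : Finite {a : Pt // a ∈ P} := inferInstance
    exact Finite.of_injective (fun a : H => (⟨a.1, a.2.1⟩ : {a : Pt // a ∈ P}))
      (fun a b hab => Subtype.ext (by simpa using hab))
  obtain ⟨a0, ha0, ha0'⟩ := exists_hull_point ⟨q, hqP⟩
  obtain ⟨i, j, hij, e⟩ := Finite.exists_ne_map_eq_of_infinite (fun n : ℕ => σ^[n] ⟨a0, ha0, ha0'⟩)
  obtain ⟨a, ha⟩ : ∃ a : H, a ∈ Function.periodicPts σ := by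
    have main : ∀ i j : ℕ, i < j → σ^[i] ⟨a0, ha0, ha0'⟩ = σ^[j] ⟨a0, ha0, ha0'⟩ →
        ∃ a : H, a ∈ Function.periodicPts σ := by
      intro i j hij e
      refine ⟨σ^[i] ⟨a0, ha0, ha0'⟩, Function.mk_mem_periodicPts (n := j - i) (by omega) ?_⟩
      rw [Function.IsPeriodicPt, Function.IsFixedPt, ← Function.iterate_add_apply, e]
      congr 1; omega
    rcases lt_or_gt_of_ne hij with h | h
    · exact main _ _ h e
    · exact main _ _ h e.symm
  set m := Function.minimalPeriod σ a with hm
  have hm0 : 0 < m := Function.minimalPeriod_pos_of_mem_periodicPts ha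
  have : NeZero m := ⟨hm0.ne'⟩
  let g : ZMod m → H := fun i => σ^[i.val] a
  have hg : ∀ i, g (i + 1) = σ (g i) := by
    intro i
    simp only [g]
    rw [← Function.iterate_succ_apply' σ, ZMod.val_add]
    have : (i.val + (1 : ZMod m).val) % m = (i.val + 1) % m := by
      rw [ZMod.val_one_eq_one_mod]; simp
    rw [this]
    exact Function.iterate_mod_minimalPeriod_eq
  have hne : ∀ i, (g i).1 ≠ (g (i + 1)).1 := fun i => by rw [hg]; exact hσ1 _
  have hleft : ∀ i, ∀ z ∈ P, 0 ≤ ori (g i).1 (g (i + 1)).1 z := fun i => by rw [hg]; exact hσ2 _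
  have hseg : ∀ i, ∀ z ∈ P, z ∈ segment ℝ (g i).1 (g (i + 1)).1 → z = (g i).1 ∨ z = (g (i + 1)).1 :=
    fun i => by rw [hg]; exact hσ3 _
  refine ⟨m, inferInstance, fun i => (g i).1, ?_, fun i => (g i).2.1, hne, hleft, hseg, ?_⟩
  · intro i j hij
    have : g i = g j := Subtype.ext hij
    have h1 := (Function.iterate_eq_iterate_iff_of_lt_minimalPeriod (ZMod.val_lt i) (ZMod.val_lt j)).1 this
    exact ZMod.val_injective m h1
  · intro z hz
    by_cases hzi : z ∈ interior (convexHull ℝ (P : Set Pt))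
    · exact Or.inl hzi
    right
    have hpos : ∀ i, 0 < ori q (g i).1 (g (i + 1)).1 := by
      intro i
      have := ori_pos_interior (hne i) (fun z hz => ori_nonneg_convexHull (hleft i) hz) hq
      rwa [ori_rot] at this
    obtain ⟨i, h1, h2⟩ := cone_cover (fun i => (g i).1) q z hpos
    have h2' : 0 ≤ ori (g (i + 1)).1 q z := by rw [← ori_rot]; exact h2
    have h3 := hleft i z hz
    let z' : H := ⟨z, hz, hzi⟩
    have b1 := ori_bary q (g i).1 (g (i + 1)).1 z z (σ z').1
    have l1 := ori_pos_interior (hσ1 z') (fun z hz => ori_nonneg_convexHull (hσ2 z') hz) hq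
    have l2 := hσ2 z' _ (g i).2.1
    have l3 := hσ2 z' _ (g (i + 1)).2.1
    change 0 < ori z (σ z').1 q at l1
    change 0 ≤ ori z (σ z').1 (g i).1 at l2
    change 0 ≤ ori z (σ z').1 (g (i + 1)).1 at l3
    rw [ori_aba, mul_zero] at b1
    have h4 : ori (g i).1 (g (i + 1)).1 z = 0 := by
      by_contra hne
      have hpos' := lt_of_le_of_ne h3 (Ne.symm hne)
      have := mul_pos hpos' l1
      have := mul_nonneg h2' l2
      have := mul_nonneg h1 l3
      linarith
    have hp := hpos i
    rw [← ori_rot] at hp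
    rcases hseg i z hz (mem_segment_of_ori hp h4 h2' h1) with e | e
    · exact ⟨i, e⟩
    · exact ⟨i + 1, e⟩

/-! ### Base families and gluing -/

/-- Closure of a family of triples under rotation. -/
def rotc {V : Type} (B : V → V → V → Prop) (a b c : V) : Prop := B a b c ∨ B b c a ∨ B c a b

/-- Image of a family of triples. -/
def push {V : Type} (B : V → V → V → Prop) (g : V → Pt) (a b c : Pt) : Prop :=
  ∃ x y z, B x y z ∧ a = g x ∧ b = g y ∧ c = g z

theorem Tri.ofBase {P : Finset Pt} {B : Pt → Pt → Pt → Prop}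
    (mem : ∀ {a b c}, B a b c → a ∈ P ∧ b ∈ P ∧ c ∈ P)
    (pos : ∀ {a b c}, B a b c → 0 < ori a b c)
    (empt : ∀ {a b c z}, B a b c → z ∈ P → InTri a b c z → z = a ∨ z = b ∨ z = c)
    (cover : ∀ {x}, x ∈ convexHull ℝ (P : Set Pt) → ∃ a b c, B a b c ∧ InTri a b c x)
    (disj : ∀ {a b c a' b' c' x}, B a b c → B a' b' c' → InTriO a b c x → InTriO a' b' c' x →
      (a' = a ∧ b' = b ∧ c' = c)) : Tri P (rotc B) where
  rot := by
    rintro a b c (h | h | h)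
    · exact Or.inr (Or.inr h)
    · exact Or.inl h
    · exact Or.inr (Or.inl h)
  mem := by
    rintro a b c (h | h | h)
    · exact (mem h).1
    · exact (mem h).2.2
    · exact (mem h).2.1
  pos := by
    rintro a b c (h | h | h)
    · exact pos h
    · have := pos h; rwa [ori_rot] at this
    · have := pos h; rwa [ori_rot, ori_rot] at this
  empt := by
    rintro a b c z (h | h | h) hz hi
    · exact empt h hz hi
    · have := empt h hz hi.rot; tauto
    · have := empt h hz hi.rot.rot; tauto
  cover := by
    intro x hx
    obtain ⟨a, b, c, h1, h2⟩ := cover hx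
    exact ⟨a, b, c, Or.inl h1, h2⟩
  disj := by
    rintro a b c a' b' c' x (h | h | h) (h' | h' | h') hi hi'
    · have := disj h h' hi hi'; tauto
    · have := disj h h' hi hi'.rot; tauto
    · have := disj h h' hi hi'.rot.rot; tauto
    · have := disj h h' hi.rot hi'; tauto
    · have := disj h h' hi.rot hi'.rot; tauto
    · have := disj h h' hi.rot hi'.rot.rot; tauto
    · have := disj h h' hi.rot.rot hi'; tauto
    · have := disj h h' hi.rot.rot hi'.rot; tauto
    · have := disj h h' hi.rot.rot hi'.rot.rot; tauto

/-- `P` realizes the abstract family of triples `B`. -/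
def Realizes {V : Type} (B : V → V → V → Prop) (P : Finset Pt) : Prop :=
  ∃ g : V → Pt, Function.Injective g ∧ range g = (P : Set Pt) ∧ Tri P (rotc (push B g))

theorem rotc_push {V : Type} {B : V → V → V → Prop} {g : V → Pt} (hg : Function.Injective g)
    (x y z : V) : rotc (push B g) (g x) (g y) (g z) ↔ rotc B x y z := by
  have key : ∀ x y z, push B g (g x) (g y) (g z) ↔ B x y z := by
    intro x y z
    constructor
    · rintro ⟨x', y', z', h, e1, e2, e3⟩
      rw [hg e1, hg e2, hg e3]; exact h
    · intro h; exact ⟨x, y, z, h, rfl, rfl, rfl⟩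
  simp only [rotc, key]

theorem glue {V : Type} [Nonempty V] {B : V → V → V → Prop} {P Q : Finset Pt}
    (hP : Realizes B P) (hQ : Realizes B Q) :
    ∃ TP TQ : Set (Sym2 Pt), IsTriangulation P TP ∧ IsTriangulation Q TQ ∧
      Compatible P Q TP TQ := by
  obtain ⟨g, gi, gr, gT⟩ := hP
  obtain ⟨g', gi', gr', gT'⟩ := hQ
  have hφ : ∀ x, (g' ∘ Function.invFun g) (g x) = g' x := by
    intro x; simp [Function.leftInverse_invFun gi x]
  refine ⟨_, _, gT.isTriangulation, gT'.isTriangulation, g' ∘ Function.invFun g, ⟨?_, ?_, ?_⟩, ?_⟩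
  · intro a ha
    rw [← gr] at ha
    obtain ⟨x, rfl⟩ := ha
    rw [hφ, ← gr']; exact mem_range_self x
  · intro a ha b hb hab
    rw [← gr] at ha hb
    obtain ⟨x, rfl⟩ := ha
    obtain ⟨y, rfl⟩ := hb
    rw [hφ, hφ] at hab
    rw [gi' hab]
  · intro b hb
    rw [← gr'] at hb
    obtain ⟨x, rfl⟩ := hb
    exact ⟨g x, by rw [← gr]; exact mem_range_self x, hφ x⟩
  · intro a b c ha hb hc
    rw [gT.isTriangle_iff', gT'.isTriangle_iff']
    rw [← Finset.mem_coe, ← gr] at ha hb hc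
    obtain ⟨x, rfl⟩ := ha
    obtain ⟨y, rfl⟩ := hb
    obtain ⟨z, rfl⟩ := hc
    rw [hφ, hφ, hφ, rotc_push gi, rotc_push gi']

/-! ### Wheels -/

section
variable {P : Finset Pt} {m : ℕ} {h : ZMod m → Pt}

theorem Cyc.wheel_cover [NeZero m] (hC : Cyc P m h) {q : Pt}
    (hq : q ∈ interior (convexHull ℝ (P : Set Pt))) {x : Pt}
    (hx : x ∈ convexHull ℝ (P : Set Pt)) : ∃ i, InTri q (h i) (h (i + 1)) x := by
  obtain ⟨i, h1, h2⟩ := cone_cover h q x (hC.pos_of_interior' hq)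
  refine ⟨i, h1, ori_nonneg_convexHull (hC.left i) hx, ?_⟩
  rw [← ori_rot]; exact h2

/-- A hull point in a triangle has no weight at internal vertices. -/
theorem Cyc.hull_weight (hC : Cyc P m h) {a b c : Pt}
    (ha : a ∈ interior (convexHull ℝ (P : Set Pt))) (hb : b ∈ P) (hc : c ∈ P) {j : ZMod m}
    (hin : InTri a b c (h j)) : ori b c (h j) = 0 := by
  have b1 := ori_bary a b c (h j) (h j) (h (j + 1))
  rw [ori_aba, mul_zero] at b1
  have l1 := hC.pos_of_interior ha j
  have l2 := hC.left j b hb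
  have l3 := hC.left j c hc
  obtain ⟨i1, i2, i3⟩ := hin
  by_contra hne
  have := mul_pos (lt_of_le_of_ne i2 (Ne.symm hne)) l1
  have := mul_nonneg i3 l2
  have := mul_nonneg i1 l3
  linarith

theorem Cyc.hull_in_wheel (hC : Cyc P m h) {q : Pt}
    (hq : q ∈ interior (convexHull ℝ (P : Set Pt))) {i j : ZMod m}
    (hin : InTri q (h i) (h (i + 1)) (h j)) : h j = h i ∨ h j = h (i + 1) := by
  have h0 := hC.hull_weight hq (hC.mem i) (hC.mem (i + 1)) hin
  apply hC.seg i _ (hC.mem j)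
  exact mem_segment_of_ori (hC.pos_of_interior hq i) h0 hin.2.2 hin.1

theorem Cyc.wheel_disj (hC : Cyc P m h) {q : Pt}
    (hq : q ∈ interior (convexHull ℝ (P : Set Pt))) {x : Pt} {i j : ZMod m}
    (hi : InTriO q (h i) (h (i + 1)) x) (j1 : 0 ≤ ori q (h j) x) (j2 : 0 ≤ ori q x (h (j + 1))) :
    i = j := by
  obtain ⟨i1, i2, i3⟩ := hi
  rw [← ori_rot] at i3
  have hx : x ≠ q := by rintro rfl; simp at i1
  rcases hC.cone_eq hq hx i1.le i3.le j1 j2 with e | ⟨e, e'⟩ | ⟨e, e'⟩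
  · exact e
  · subst e
    rw [ori_swap] at i3; linarith
  · linarith

end

/-- The abstract wheel. -/
def B1 (m : ℕ) (x y z : Option (ZMod m)) : Prop := ∃ i, x = none ∧ y = some i ∧ z = some (i + 1)

theorem realizes1 {P : Finset Pt} {m : ℕ} [NeZero m] {h : ZMod m → Pt} (hC : Cyc P m h) {q : Pt}
    (hqP : q ∈ P) (hq : ∀ z ∈ P, z ∈ interior (convexHull ℝ (P : Set Pt)) ↔ z = q) :
    Realizes (B1 m) P := by
  have hq' := (hq q hqP).2 rfl
  refine ⟨fun o => o.elim q h, ?_, ?_, ?_⟩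
  · intro a b hab
    cases a <;> cases b <;> simp only [Option.elim] at hab
    · rfl
    · exact absurd (hab ▸ hq') (hC.not_interior _)
    · exact absurd (hab ▸ hq') (hC.not_interior _)
    · rw [hC.inj hab]
  · ext z
    constructor
    · rintro ⟨o, rfl⟩
      cases o
      · exact hqP
      · exact hC.mem _
    · intro hz
      rcases hC.hull z hz with h1 | ⟨i, rfl⟩
      · exact ⟨none, ((hq z hz).1 h1).symm⟩
      · exact ⟨some i, rfl⟩
  have hB : push (B1 m) (fun o => o.elim q h) =
      fun a b c => ∃ i, a = q ∧ b = h i ∧ c = h (i + 1) := by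
    funext a b c
    apply propext
    constructor
    · rintro ⟨x, y, z, ⟨i, rfl, rfl, rfl⟩, rfl, rfl, rfl⟩
      exact ⟨i, rfl, rfl, rfl⟩
    · rintro ⟨i, rfl, rfl, rfl⟩
      exact ⟨_, _, _, ⟨i, rfl, rfl, rfl⟩, rfl, rfl, rfl⟩
  rw [hB]
  apply Tri.ofBase
  · rintro a b c ⟨i, rfl, rfl, rfl⟩
    exact ⟨hqP, hC.mem _, hC.mem _⟩
  · rintro a b c ⟨i, rfl, rfl, rfl⟩
    exact hC.pos_of_interior' hq' i
  · rintro a b c z ⟨i, rfl, rfl, rfl⟩ hz hin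
    rcases hC.hull z hz with h1 | ⟨j, rfl⟩
    · exact Or.inl ((hq z hz).1 h1)
    · exact Or.inr (hC.hull_in_wheel hq' hin)
  · intro x hx
    obtain ⟨i, hi⟩ := hC.wheel_cover hq' hx
    exact ⟨_, _, _, ⟨i, rfl, rfl, rfl⟩, hi⟩
  · rintro a b c a' b' c' x ⟨i, rfl, rfl, rfl⟩ ⟨j, rfl, rfl, rfl⟩ hi hj
    have := hC.wheel_disj hq' hi hj.1.le (by rw [ori_rot]; exact hj.2.2.le)
    subst this
    exact ⟨rfl, rfl, rfl⟩

/-! ### Two internal points -/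

theorem lemL {q p a b c x : Pt} (A : 0 < ori q a b) (B : 0 < ori q b c) (s0 : 0 < ori q a p)
    (s2 : 0 < ori q p c) (X : 0 ≤ ori q a x) (Y : 0 ≤ ori q x b) (h : 0 ≤ ori q p x) :
    0 ≤ ori q x c := by
  have e1 := plucker q a b x c
  have e2 := plucker q a b p x
  have e3 := plucker q a b p c
  rw [ori_swap q x b] at e1 e2
  rcases le_or_gt 0 (ori q a c) with F | F
  · have : 0 ≤ ori q a b * ori q x c := by nlinarith [mul_nonneg X B.le, mul_nonneg F Y]
    exact nonneg_of_mul_nonneg_right this A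
  · have h1 := mul_nonneg A.le h
    have h2 := mul_nonneg_of_nonpos_of_nonpos F.le (neg_nonpos.2 h1)
    have h3 : 0 ≤ ori q a p * (ori q a b * ori q x c) := by
      have : ori q a p * (ori q a b * ori q x c) =
        ori q a c * -(ori q a b * ori q p x) + ori q a x * ori q a b * ori q p c := by
        linear_combination ori q a p * e1 + ori q a c * e2 - ori q a x * e3
      rw [this]; positivity
    exact nonneg_of_mul_nonneg_right (nonneg_of_mul_nonneg_right h3 s0) A

theorem lemL' {q p a b c x : Pt} (A : 0 < ori q a b) (B : 0 < ori q b c) (s0 : 0 < ori q a p)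
    (s2 : 0 < ori q p c) (X : 0 ≤ ori q b x) (Y : 0 ≤ ori q x c) (h : 0 ≤ ori q x p) :
    0 ≤ ori q a x := by
  have e1 := plucker q a b x c
  have e2 := plucker q b p x c
  have e3 := plucker q a b p c
  rw [ori_swap q x p] at e2
  rcases le_or_gt 0 (ori q a c) with F | F
  · have : 0 ≤ ori q b c * ori q a x := by nlinarith [mul_nonneg A.le Y, mul_nonneg F X]
    exact nonneg_of_mul_nonneg_right this B
  · have h1 := mul_nonneg B.le h
    have h2 := mul_nonneg_of_nonpos_of_nonpos F.le (neg_nonpos.2 h1)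
    have h3 : 0 ≤ ori q p c * (ori q b c * ori q a x) := by
      have : ori q p c * (ori q b c * ori q a x) =
        ori q a c * -(ori q b c * ori q x p) + ori q x c * ori q a p * ori q b c := by
        linear_combination -ori q p c * e1 - ori q a c * e2 + ori q x c * e3
      rw [this]; positivity
    exact nonneg_of_mul_nonneg_right (nonneg_of_mul_nonneg_right h3 s2) B

theorem cone01 {q p a b c x : Pt} (A : 0 < ori q a b) (B : 0 < ori q b c) (s0 : 0 < ori q a p)
    (s2 : 0 < ori q p c) {D α β γ : ℝ} (hD : 0 < D) (hα : 0 ≤ α) (hβ : 0 ≤ β) (hγ : 0 ≤ γ)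
    (hu : ∀ u, D * ori q u x = α * ori q u p + β * ori q u a + γ * ori q u b) :
    (0 ≤ ori q a x ∧ 0 ≤ ori q x b) ∨ (0 ≤ ori q b x ∧ 0 ≤ ori q x c) := by
  have e3 := plucker q a b p c
  have ha := hu a
  have hb := hu b
  have hc := hu c
  rw [ori_abb] at ha hb
  rw [ori_swap q a b] at hb
  rw [ori_swap q p c, ori_swap q a c, ori_swap q b c, ori_swap q x c] at hc
  rcases le_or_gt 0 (ori q b x) with G | G
  · refine Or.inr ⟨G, ?_⟩
    have h0 := mul_nonneg hD.le G
    refine nonneg_of_mul_nonneg_right (b := ori q x c) (a := D) ?_ hD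
    rcases hβ.eq_or_lt with h | h
    · subst h
      nlinarith [mul_nonneg hα s2.le, mul_nonneg hγ B.le]
    · have h1 : 0 < α * ori q b p := by nlinarith [mul_pos h A]
      have h2 : 0 < ori q b p := pos_of_mul_pos_right h1 hα
      have h3 : 0 ≤ ori q b p * (α * ori q p c + β * ori q a c) := by
        have : ori q b p * (α * ori q p c + β * ori q a c) =
          ori q p c * (D * ori q b x) + β * ori q a p * ori q b c := by
          rw [hb]; linear_combination β * e3
        rw [this]; positivity
      have h4 := nonneg_of_mul_nonneg_right h3 h2
      nlinarith [mul_nonneg hγ B.le]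
  · refine Or.inl ⟨?_, by rw [ori_swap]; linarith⟩
    refine nonneg_of_mul_nonneg_right (b := ori q a x) (a := D) ?_ hD
    rw [ha]
    have := mul_nonneg hα s0.le
    have := mul_nonneg hγ A.le
    linarith

theorem cone12 {q p a b c x : Pt} (A : 0 < ori q a b) (B : 0 < ori q b c) (s0 : 0 < ori q a p)
    (s2 : 0 < ori q p c) {D α β γ : ℝ} (hD : 0 < D) (hα : 0 ≤ α) (hβ : 0 ≤ β) (hγ : 0 ≤ γ)
    (hu : ∀ u, D * ori q u x = α * ori q u p + β * ori q u b + γ * ori q u c) :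
    (0 ≤ ori q a x ∧ 0 ≤ ori q x b) ∨ (0 ≤ ori q b x ∧ 0 ≤ ori q x c) := by
  have e3 := plucker q a b p c
  have ha := hu a
  have hb := hu b
  have hc := hu c
  rw [ori_abb] at hb hc
  rw [ori_swap q p c, ori_swap q b c, ori_swap q x c] at hc
  rcases le_or_gt (ori q b x) 0 with G | G
  · refine Or.inl ⟨?_, by rw [ori_swap]; linarith⟩
    have h0 := mul_nonneg hD.le (neg_nonneg.2 G)
    refine nonneg_of_mul_nonneg_right (b := ori q a x) (a := D) ?_ hD
    rcases hγ.eq_or_lt with h | h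
    · subst h
      nlinarith [mul_nonneg hα s0.le, mul_nonneg hβ A.le]
    · have h1 : 0 < α * -ori q b p := by nlinarith [mul_pos h B]
      have h2 : 0 < -ori q b p := pos_of_mul_pos_right h1 hα
      have h3 : 0 ≤ -ori q b p * (α * ori q a p + γ * ori q a c) := by
        have : -ori q b p * (α * ori q a p + γ * ori q a c) =
          ori q a p * (D * -ori q b x) + γ * ori q a b * ori q p c := by
          rw [mul_neg, hb]; linear_combination -γ * e3
        rw [this]; positivity
      have h4 := nonneg_of_mul_nonneg_right h3 h2
      nlinarith [mul_nonneg hβ A.le]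
  · refine Or.inr ⟨G.le, ?_⟩
    refine nonneg_of_mul_nonneg_right (b := ori q x c) (a := D) ?_ hD
    have := mul_nonneg hα s2.le
    have := mul_nonneg hβ B.le
    linarith

theorem opp_disj {p x v0 v1 v2 v3 : Pt} (a0 : 0 < ori p v0 v1) (a1 : 0 < ori p v1 v2)
    (a2 : 0 < ori p v2 v3) (a3 : 0 < ori p v3 v0) (s0 : 0 < ori p v0 x) (s1 : 0 < ori p x v1)
    (s2 : 0 < ori p v2 x) (s3 : 0 < ori p x v3) : False := by
  have : ori p v0 v1 * (ori p v2 x * ori p x v3) + ori p v1 v2 * (ori p v0 x * ori p x v3) +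
    ori p v2 v3 * (ori p v0 x * ori p x v1) + ori p v3 v0 * (ori p x v1 * ori p v2 x) = 0 := by
    unfold ori; ring
  have t : 0 < ori p v0 v1 * (ori p v2 x * ori p x v3) + ori p v1 v2 * (ori p v0 x * ori p x v3) +
    ori p v2 v3 * (ori p v0 x * ori p x v1) + ori p v3 v0 * (ori p x v1 * ori p v2 x) := by
    positivity
  linarith

/-- The triangles for two internal points. -/
inductive K2 {m : ℕ} (p q : Pt) (h : ZMod m → Pt) : Pt → Pt → Pt → Prop
  | w (i : ZMod m) (h0 : i ≠ 0) (h1 : i ≠ 1) : K2 p q h q (h i) (h (i + 1))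
  | t0 : K2 p q h p (h 0) (h 1)
  | t1 : K2 p q h p (h 1) (h (1 + 1))
  | t2 : K2 p q h p (h (1 + 1)) q
  | t3 : K2 p q h p q (h 0)

section
variable {P : Finset Pt} {m : ℕ} {h : ZMod m → Pt} {p q : Pt}

theorem small_cone (hC : Cyc P m h)
    (hp : p ∈ interior (convexHull ℝ (P : Set Pt))) (hq : q ∈ interior (convexHull ℝ (P : Set Pt)))
    (s0 : 0 < ori q (h 0) p) (s2 : 0 < ori q p (h (1 + 1))) {x a b c : Pt}
    (hK : K2 p q h a b c) (hap : a = p) (hx : InTri a b c x) :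
    (0 ≤ ori q (h 0) x ∧ 0 ≤ ori q x (h 1)) ∨ (0 ≤ ori q (h 1) x ∧ 0 ≤ ori q x (h (1 + 1))) := by
  have A : 0 < ori q (h 0) (h 1) := by simpa using hC.pos_of_interior' hq 0
  have B := hC.pos_of_interior' hq 1
  have A' : 0 < ori p (h 0) (h 1) := by simpa using hC.pos_of_interior' hp 0
  have B' := hC.pos_of_interior' hp 1
  obtain ⟨x1, x2, x3⟩ := hx
  cases hK with
  | w i h0 h1 => subst hap; simp at s0
  | t0 =>
    exact cone01 A B s0 s2 A' x2 x3 x1 (fun u => ori_bary _ _ _ _ _ _)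
  | t1 =>
    exact cone12 A B s0 s2 B' x2 x3 x1 (fun u => ori_bary _ _ _ _ _ _)
  | t2 =>
    have D : 0 < ori p (h (1 + 1)) q := by rw [ori_rot]; exact s2
    refine cone12 A B s0 s2 D x2 le_rfl x3 (fun u => ?_)
    rw [ori_bary, ori_aba]; ring
  | t3 =>
    have D : 0 < ori p q (h 0) := by rw [← ori_rot]; exact s0
    refine cone01 A B s0 s2 D x2 x1 le_rfl (fun u => ?_)
    rw [ori_bary, ori_aba]; ring

theorem tri2 [NeZero m] (hC : Cyc P m h) (hpP : p ∈ P) (hqP : q ∈ P)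
    (hpq : ∀ z ∈ P, z ∈ interior (convexHull ℝ (P : Set Pt)) ↔ z = p ∨ z = q)
    (s0 : 0 < ori q (h 0) p) (s2 : 0 < ori q p (h (1 + 1))) : Tri P (rotc (K2 p q h)) := by
  have hp := (hpq p hpP).2 (Or.inl rfl)
  have hq := (hpq q hqP).2 (Or.inr rfl)
  have hne : p ≠ q := by rintro rfl; simp at s0
  have A : 0 < ori q (h 0) (h 1) := by simpa using hC.pos_of_interior' hq 0
  have B := hC.pos_of_interior' hq 1
  have A' : 0 < ori p (h 0) (h 1) := by simpa using hC.pos_of_interior' hp 0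
  have B' := hC.pos_of_interior' hp 1
  have L0 : ∀ x ∈ convexHull ℝ (P : Set Pt), 0 ≤ ori (h 0) (h 1) x := by
    intro x hx
    have := ori_nonneg_convexHull (hC.left 0) hx
    simpa using this
  have L1 : ∀ x ∈ convexHull ℝ (P : Set Pt), 0 ≤ ori (h 1) (h (1 + 1)) x := by
    intro x hx
    exact ori_nonneg_convexHull (hC.left 1) hx
  have C2 : 0 < ori p (h (1 + 1)) q := by rw [ori_rot]; exact s2
  have C3 : 0 < ori p q (h 0) := by rw [← ori_rot]; exact s0
  have seg0 : ∀ z ∈ P, z ∈ segment ℝ (h 0) (h 1) → z = h 0 ∨ z = h 1 := by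
    have := hC.seg 0
    simpa using this
  have pcone : (0 ≤ ori q (h 0) p ∧ 0 ≤ ori q p (h 1)) ∨
      (0 ≤ ori q (h 1) p ∧ 0 ≤ ori q p (h (1 + 1))) := by
    rcases le_or_gt 0 (ori q (h 1) p) with G | G
    · exact Or.inr ⟨G, s2.le⟩
    · refine Or.inl ⟨s0.le, ?_⟩
      rw [ori_swap]; linarith
  have pw : ∀ i : ZMod m, i ≠ 0 → i ≠ 1 → ¬ InTri q (h i) (h (i + 1)) p := by
    rintro i i0 i1 ⟨x1, -, x3⟩
    rw [← ori_rot] at x3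
    rcases pcone with ⟨y1, y2⟩ | ⟨y1, y2⟩
    · rcases hC.cone_eq hq hne x1 x3 y1 (by simpa using y2) with e | ⟨e, e'⟩ | ⟨e, e'⟩
      · exact i0 e
      · exact s0.ne' e'
      · simp at e; exact i1 e
    · rcases hC.cone_eq hq hne x1 x3 y1 y2 with e | ⟨e, e'⟩ | ⟨e, e'⟩
      · exact i1 e
      · apply i0; simpa using e.symm
      · subst e; rw [ori_swap] at e'; linarith
  have mixed : ∀ {a b c x i}, K2 p q h a b c → a = p → InTri a b c x → i ≠ 0 → i ≠ 1 →
      InTriO q (h i) (h (i + 1)) x → False := by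
    intro a b c x i hK ha hx i0 i1 hi
    rcases small_cone hC hp hq s0 s2 hK ha hx with ⟨y1, y2⟩ | ⟨y1, y2⟩
    · exact i0 (hC.wheel_disj hq hi y1 (by simpa using y2))
    · exact i1 (hC.wheel_disj hq hi y1 y2)
  apply Tri.ofBase
  · intro a b c hK
    cases hK <;> simp [hpP, hqP, hC.mem]
  · intro a b c hK
    cases hK with
    | w i h0 h1 => exact hC.pos_of_interior' hq i
    | t0 => exact A'
    | t1 => exact B'
    | t2 => exact C2
    | t3 => exact C3
  · intro a b c z hK hz hin
    cases hK with
    | w i h0 h1 =>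
      rcases hC.hull z hz with hi | ⟨j, rfl⟩
      · rcases (hpq z hz).1 hi with rfl | rfl
        · exact absurd hin (pw i h0 h1)
        · exact Or.inl rfl
      · exact Or.inr (hC.hull_in_wheel hq hin)
    | t0 =>
      rcases hC.hull z hz with hi | ⟨j, rfl⟩
      · rcases (hpq z hz).1 hi with rfl | rfl
        · exact Or.inl rfl
        · have e : ori p (h 0) z = - ori z (h 0) p := by unfold ori; ring
          have := hin.1
          linarith
      · have hw := hC.hull_weight hp (hC.mem 0) (hC.mem 1) hin
        refine Or.inr (seg0 _ (hC.mem j) (mem_segment_of_ori (c := p) ?_ hw hin.2.2 hin.1))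
        rw [ori_rot]; exact A'
    | t1 =>
      rcases hC.hull z hz with hi | ⟨j, rfl⟩
      · rcases (hpq z hz).1 hi with rfl | rfl
        · exact Or.inl rfl
        · have e : ori (h (1 + 1)) p z = - ori z p (h (1 + 1)) := by unfold ori; ring
          have := hin.2.2
          linarith
      · have hw := hC.hull_weight hp (hC.mem 1) (hC.mem (1 + 1)) hin
        exact Or.inr (hC.seg 1 _ (hC.mem j) (mem_segment_of_ori (hC.pos_of_interior hp 1) hw hin.2.2 hin.1))
    | t2 =>
      rcases hC.hull z hz with hi | ⟨j, rfl⟩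
      · rcases (hpq z hz).1 hi with rfl | rfl
        · exact Or.inl rfl
        · exact Or.inr (Or.inr rfl)
      · have w1 := hC.hull_weight hp (hC.mem (1 + 1)) hqP hin
        have w2 := hC.hull_weight hq hpP (hC.mem (1 + 1)) hin.rot.rot
        have e := bary_eq C2 (h j)
        have w3 := ori_sum p (h (1 + 1)) q (h j)
        have : ori q p (h j) = ori p (h (1 + 1)) q := by linarith
        rw [w1, w2, this, div_self C2.ne'] at e
        right; left
        rw [e]; simp
    | t3 =>
      rcases hC.hull z hz with hi | ⟨j, rfl⟩
      · rcases (hpq z hz).1 hi with rfl | rfl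
        · exact Or.inl rfl
        · exact Or.inr (Or.inl rfl)
      · have w1 := hC.hull_weight hp hqP (hC.mem 0) hin
        have w2 := hC.hull_weight hq (hC.mem 0) hpP hin.rot
        have e := bary_eq C3 (h j)
        have w3 := ori_sum p q (h 0) (h j)
        have : ori p q (h j) = ori p q (h 0) := by linarith
        rw [w1, w2, this, div_self C3.ne'] at e
        right; right
        rw [e]; simp
  · intro x hx
    obtain ⟨i, hi⟩ := hC.wheel_cover hq hx
    by_cases hi01 : i ≠ 0 ∧ i ≠ 1
    · exact ⟨_, _, _, K2.w i hi01.1 hi01.2, hi⟩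
    have hi' : (0 ≤ ori q (h 0) x ∧ 0 ≤ ori q x (h 1)) ∨
        (0 ≤ ori q (h 1) x ∧ 0 ≤ ori q x (h (1 + 1))) := by
      obtain ⟨x1, -, x3⟩ := hi
      rw [← ori_rot] at x3
      by_cases e : i = 0
      · subst e; left; exact ⟨x1, by simpa using x3⟩
      · have e : i = 1 := by tauto
        subst e; right; exact ⟨x1, x3⟩
    have hcov : (0 ≤ ori p (h 0) x ∧ 0 ≤ ori p x (h 1)) ∨
        (0 ≤ ori p (h 1) x ∧ 0 ≤ ori p x (h (1 + 1))) ∨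
        (0 ≤ ori p (h (1 + 1)) x ∧ 0 ≤ ori p x q) ∨ (0 ≤ ori p q x ∧ 0 ≤ ori p x (h 0)) := by
      obtain ⟨k, hk⟩ := cone_cover (m := 4) (fun k : Fin 4 => ![h 0, h 1, h (1 + 1), q] k) p x (by
        intro k
        change Fin 4 at k
        fin_cases k
        · exact A'
        · exact B'
        · exact C2
        · exact C3)
      change Fin 4 at k
      fin_cases k
      · exact Or.inl hk
      · exact Or.inr (Or.inl hk)
      · exact Or.inr (Or.inr (Or.inl hk))
      · exact Or.inr (Or.inr (Or.inr hk))
    rcases hcov with ⟨y1, y2⟩ | ⟨y1, y2⟩ | ⟨y1, y2⟩ | ⟨y1, y2⟩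
    · exact ⟨_, _, _, K2.t0, y1, L0 x hx, by rw [← ori_rot]; exact y2⟩
    · exact ⟨_, _, _, K2.t1, y1, L1 x hx, by rw [← ori_rot]; exact y2⟩
    · have y3 : 0 ≤ ori q p x := by rw [← ori_rot]; exact y2
      refine ⟨_, _, _, K2.t2, y1, ?_, y3⟩
      have : 0 ≤ ori q x (h (1 + 1)) := by
        rcases hi' with ⟨z1, z2⟩ | ⟨z1, z2⟩
        · exact lemL A B s0 s2 z1 z2 y3
        · exact z2
      rw [ori_rot] at this; exact this
    · have y3 : 0 ≤ ori q x p := by rw [ori_rot]; exact y1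
      refine ⟨_, _, _, K2.t3, y1, ?_, by rw [← ori_rot]; exact y2⟩
      rcases hi' with ⟨z1, z2⟩ | ⟨z1, z2⟩
      · exact z1
      · exact lemL' A B s0 s2 z1 z2 y3
  · intro a b c a' b' c' x hK hK' hi hi'
    have sw : ∀ u v : Pt, 0 < ori u v x → 0 < ori v u x → False := by
      intro u v e1 e2
      rw [ori_swap'] at e2; linarith
    have hK1 := hK
    have hK1' := hK'
    cases hK with
    | w i h0 h1 =>
      cases hK' with
      | w j h0' h1' =>
        have := hC.wheel_disj hq hi hi'.1.le (by rw [ori_rot]; exact hi'.2.2.le)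
        subst this
        exact ⟨rfl, rfl, rfl⟩
      | t0 => exact (mixed hK1' rfl hi'.le h0 h1 hi).elim
      | t1 => exact (mixed hK1' rfl hi'.le h0 h1 hi).elim
      | t2 => exact (mixed hK1' rfl hi'.le h0 h1 hi).elim
      | t3 => exact (mixed hK1' rfl hi'.le h0 h1 hi).elim
    | t0 =>
      cases hK' with
      | w j h0' h1' => exact (mixed hK1 rfl hi.le h0' h1' hi').elim
      | t0 => exact ⟨rfl, rfl, rfl⟩
      | t1 => exact (sw _ _ hi.2.2 hi'.1).elim
      | t2 => exact (opp_disj A' B' C2 C3 hi.1 (by rw [ori_rot]; exact hi.2.2) hi'.1 (by rw [ori_rot]; exact hi'.2.2)).elim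
      | t3 => exact (sw _ _ hi.1 hi'.2.2).elim
    | t1 =>
      cases hK' with
      | w j h0' h1' => exact (mixed hK1 rfl hi.le h0' h1' hi').elim
      | t0 => exact (sw _ _ hi'.2.2 hi.1).elim
      | t1 => exact ⟨rfl, rfl, rfl⟩
      | t2 => exact (sw _ _ hi.2.2 hi'.1).elim
      | t3 => exact (opp_disj B' C2 C3 A' hi.1 (by rw [ori_rot]; exact hi.2.2) hi'.1 (by rw [ori_rot]; exact hi'.2.2)).elim
    | t2 =>
      cases hK' with
      | w j h0' h1' => exact (mixed hK1 rfl hi.le h0' h1' hi').elim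
      | t0 => exact (opp_disj A' B' C2 C3 hi'.1 (by rw [ori_rot]; exact hi'.2.2) hi.1 (by rw [ori_rot]; exact hi.2.2)).elim
      | t1 => exact (sw _ _ hi'.2.2 hi.1).elim
      | t2 => exact ⟨rfl, rfl, rfl⟩
      | t3 => exact (sw _ _ hi.2.2 hi'.1).elim
    | t3 =>
      cases hK' with
      | w j h0' h1' => exact (mixed hK1 rfl hi.le h0' h1' hi').elim
      | t0 => exact (sw _ _ hi'.1 hi.2.2).elim
      | t1 => exact (opp_disj B' C2 C3 A' hi'.1 (by rw [ori_rot]; exact hi'.2.2) hi.1 (by rw [ori_rot]; exact hi.2.2)).elim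
      | t2 => exact (sw _ _ hi'.2.2 hi.1).elim
      | t3 => exact ⟨rfl, rfl, rfl⟩

end

/-- The abstract triangulation for two internal points. -/
inductive B2 (m : ℕ) :
    Option (Option (ZMod m)) → Option (Option (ZMod m)) → Option (Option (ZMod m)) → Prop
  | w (i : ZMod m) (h0 : i ≠ 0) (h1 : i ≠ 1) : B2 m (some none) (some (some i)) (some (some (i + 1)))
  | t0 : B2 m none (some (some 0)) (some (some 1))
  | t1 : B2 m none (some (some 1)) (some (some (1 + 1)))
  | t2 : B2 m none (some (some (1 + 1))) (some none)
  | t3 : B2 m none (some none) (some (some 0))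

theorem realizes2_aux {P : Finset Pt} {m : ℕ} [NeZero m] {h : ZMod m → Pt} (hC : Cyc P m h)
    {p q : Pt} (hpP : p ∈ P) (hqP : q ∈ P)
    (hpq : ∀ z ∈ P, z ∈ interior (convexHull ℝ (P : Set Pt)) ↔ z = p ∨ z = q)
    (s0 : 0 < ori q (h 0) p) (s2 : 0 < ori q p (h (1 + 1))) : Realizes (B2 m) P := by
  have hp := (hpq p hpP).2 (Or.inl rfl)
  have hq := (hpq q hqP).2 (Or.inr rfl)
  have hne : p ≠ q := by rintro rfl; simp at s0
  refine ⟨fun o => o.elim p (fun o => o.elim q h), ?_, ?_, ?_⟩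
  · rintro (_ | _ | a) (_ | _ | b) hab <;> simp only [Option.elim] at hab
    · rfl
    · exact absurd hab hne
    · exact absurd (hab ▸ hp) (hC.not_interior _)
    · exact absurd hab.symm hne
    · rfl
    · exact absurd (hab ▸ hq) (hC.not_interior _)
    · exact absurd (hab ▸ hp) (hC.not_interior _)
    · exact absurd (hab ▸ hq) (hC.not_interior _)
    · rw [hC.inj hab]
  · ext z
    constructor
    · rintro ⟨(_ | _ | o), rfl⟩
      · exact hpP
      · exact hqP
      · exact hC.mem _
    · intro hz
      rcases hC.hull z hz with h1 | ⟨i, rfl⟩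
      · rcases (hpq z hz).1 h1 with rfl | rfl
        · exact ⟨none, rfl⟩
        · exact ⟨some none, rfl⟩
      · exact ⟨some (some i), rfl⟩
  have hB : push (B2 m) (fun o => o.elim p (fun o => o.elim q h)) = K2 p q h := by
    funext a b c
    apply propext
    constructor
    · rintro ⟨x, y, z, hB, rfl, rfl, rfl⟩
      cases hB with
      | w i h0 h1 => exact K2.w i h0 h1
      | t0 => exact K2.t0
      | t1 => exact K2.t1
      | t2 => exact K2.t2
      | t3 => exact K2.t3
    · intro hK
      cases hK with
      | w i h0 h1 => exact ⟨_, _, _, B2.w i h0 h1, rfl, rfl, rfl⟩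
      | t0 => exact ⟨_, _, _, B2.t0, rfl, rfl, rfl⟩
      | t1 => exact ⟨_, _, _, B2.t1, rfl, rfl, rfl⟩
      | t2 => exact ⟨_, _, _, B2.t2, rfl, rfl, rfl⟩
      | t3 => exact ⟨_, _, _, B2.t3, rfl, rfl, rfl⟩
  rw [hB]
  exact tri2 hC hpP hqP hpq s0 s2

theorem Cyc.shift {P : Finset Pt} {m : ℕ} {h : ZMod m → Pt} (hC : Cyc P m h) (c : ZMod m) :
    Cyc P m (fun i => h (i + c)) where
  inj := fun i j hij => add_right_cancel (hC.inj hij)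
  mem := fun i => hC.mem _
  ne := fun i => by have := hC.ne (i + c); rwa [add_right_comm] at this
  left := fun i => by have := hC.left (i + c); rwa [add_right_comm] at this
  seg := fun i => by have := hC.seg (i + c); rwa [add_right_comm] at this
  hull := fun z hz => by
    rcases hC.hull z hz with h1 | ⟨i, rfl⟩
    · exact Or.inl h1
    · exact Or.inr ⟨i - c, by simp⟩

theorem pos_of_cone {q a b x : Pt} (hp : 0 < ori q a b) (hx : x ≠ q) (h1 : ori q a x = 0)
    (h2 : ori q x b = 0) : False := by
  apply hx
  have h2' : ori b q x = 0 := by rw [← h2]; unfold ori; ring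
  have e := bary_eq hp x
  have hs := ori_sum q a b x
  have : ori a b x = ori q a b := by linarith
  rw [h1, h2', this, div_self hp.ne'] at e
  rw [e]; simp

theorem labelling {P : Finset Pt} {m : ℕ} [NeZero m] {h : ZMod m → Pt} (hC : Cyc P m h)
    {p q : Pt} (hp : p ∈ interior (convexHull ℝ (P : Set Pt)))
    (hq : q ∈ interior (convexHull ℝ (P : Set Pt))) (hne : p ≠ q) :
    ∃ c, (0 < ori q (h c) p ∧ 0 < ori q p (h (c + 1 + 1))) ∨
      (0 < ori p (h c) q ∧ 0 < ori p q (h (c + 1 + 1))) := by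
  obtain ⟨i, i1, i2⟩ := cone_cover h q p (hC.pos_of_interior' hq)
  have A := hC.pos_of_interior' hq i
  have B := hC.pos_of_interior' hq (i + 1)
  have Z := hC.pos_of_interior' hq (i - 1)
  rw [sub_add_cancel] at Z
  rcases i2.eq_or_lt with i2 | i2
  · have j1 : 0 < ori q (h i) p := by
      rcases i1.eq_or_lt with j | j
      · exact (pos_of_cone A hne j.symm i2.symm).elim
      · exact j
    refine ⟨i, Or.inl ⟨j1, ?_⟩⟩
    have e := plucker q (h i) (h (i + 1)) p (h (i + 1 + 1))
    have z : ori q (h (i + 1)) p = 0 := by rw [ori_swap, ← i2, neg_zero]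
    rw [z] at e
    have := mul_pos j1 B
    exact pos_of_mul_pos_right (a := ori q (h i) (h (i + 1))) (by linarith) A.le
  rcases i1.eq_or_lt with i1 | i1
  · refine ⟨i - 1, Or.inl ⟨?_, by rw [sub_add_cancel]; exact i2⟩⟩
    have e := plucker q (h (i - 1)) (h i) p (h (i + 1))
    rw [← i1] at e
    have := mul_pos Z i2
    exact pos_of_mul_pos_left (b := ori q (h i) (h (i + 1))) (by linarith) A.le
  rcases lt_or_ge 0 (ori q p (h (i + 1 + 1))) with k | k
  · exact ⟨i, Or.inl ⟨i1, k⟩⟩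
  rcases lt_or_ge 0 (ori q (h (i - 1)) p) with l | l
  · exact ⟨i - 1, Or.inl ⟨l, by rw [sub_add_cancel]; exact i2⟩⟩
  have r1 : ∀ u, ori q u (q + q - p) = - ori q u p := by
    intro u; unfold ori; simp; ring
  have r2 : ∀ u, ori q (q + q - p) u = - ori q p u := by
    intro u; unfold ori; simp; ring
  have hx : q + q - p ≠ q := by
    intro e
    apply hne
    have : q - p = 0 := by
      have := congrArg (fun z => z - q) e
      simpa [add_sub_assoc] using this
    exact (sub_eq_zero.1 this).symm
  have z : ori q (h (i + 1)) p = - ori q p (h (i + 1)) := ori_swap _ _ _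
  have z' : ori q (h i) p = - ori q p (h i) := ori_swap _ _ _
  rcases hC.cone_eq hq hx (i := i + 1) (j := i - 1) (by rw [r1]; linarith) (by rw [r2]; linarith)
    (by rw [r1]; linarith) (by rw [r2, sub_add_cancel]; linarith) with e | ⟨e, e'⟩ | ⟨e, e'⟩
  · rw [e] at A
    rw [ori_swap] at A; linarith
  · refine ⟨i + 1, Or.inr ⟨by rw [ori_rot]; exact i2, ?_⟩⟩
    rw [← e, sub_add_cancel, ← ori_rot]; exact i1
  · rw [sub_add_cancel] at e
    exact absurd (congrArg h e).symm (hC.ne i)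

theorem realizes2 {P : Finset Pt} {m : ℕ} [NeZero m] {h : ZMod m → Pt} (hC : Cyc P m h)
    {p q : Pt} (hpP : p ∈ P) (hqP : q ∈ P) (hne : p ≠ q)
    (hpq : ∀ z ∈ P, z ∈ interior (convexHull ℝ (P : Set Pt)) ↔ z = p ∨ z = q) :
    Realizes (B2 m) P := by
  have hp := (hpq p hpP).2 (Or.inl rfl)
  have hq := (hpq q hqP).2 (Or.inr rfl)
  obtain ⟨c, ⟨h1, h2⟩ | ⟨h1, h2⟩⟩ := labelling hC hp hq hne
  · refine realizes2_aux (hC.shift c) hpP hqP hpq ?_ ?_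
    · simpa using h1
    · have e : (1 + 1 + c : ZMod m) = c + 1 + 1 := by ring
      simpa only [e] using h2
  · refine realizes2_aux (hC.shift c) hqP hpP (fun z hz => (hpq z hz).trans or_comm) ?_ ?_
    · simpa using h1
    · have e : (1 + 1 + c : ZMod m) = c + 1 + 1 := by ring
      simpa only [e] using h2

theorem Realizes.card {V : Type} {B : V → V → V → Prop} {P : Finset Pt} (hR : Realizes B P) :
    P.card = Nat.card V := by
  obtain ⟨g, gi, gr, -⟩ := hR
  rw [← Set.ncard_coe_finset, ← gr, ← Set.image_univ, Set.ncard_image_of_injective _ gi,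
    Set.ncard_univ]

theorem exists_realizes1 {P : Finset Pt} (hk : internalCount P = 1) :
    ∃ m, P.card = m + 1 ∧ Realizes (B1 m) P := by
  obtain ⟨q, hq⟩ := Set.ncard_eq_one.1 hk
  have hi : InternalPoint P q := by
    have : q ∈ {p | InternalPoint P p} := by rw [hq]; rfl
    exact this
  obtain ⟨m, hm, h, hC⟩ := exists_cyc hi.1 hi.2
  have hR : Realizes (B1 m) P := by
    refine realizes1 hC hi.1 (fun z hz => ⟨fun hz' => ?_, fun e => e ▸ hi.2⟩)
    have : z ∈ {p | InternalPoint P p} := ⟨hz, hz'⟩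
    rw [hq] at this
    exact this
  refine ⟨m, ?_, hR⟩
  rw [hR.card, Nat.card_eq_fintype_card, Fintype.card_option, ZMod.card]

theorem exists_realizes2 {P : Finset Pt} (hk : internalCount P = 2) :
    ∃ m, P.card = m + 1 + 1 ∧ Realizes (B2 m) P := by
  obtain ⟨p, q, hne, hq⟩ := Set.ncard_eq_two.1 hk
  have hi : ∀ z, InternalPoint P z ↔ z = p ∨ z = q := by
    intro z
    have : z ∈ {p | InternalPoint P p} ↔ z ∈ ({p, q} : Set Pt) := by rw [hq]
    exact this
  have ip := (hi p).2 (Or.inl rfl)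
  have iq := (hi q).2 (Or.inr rfl)
  obtain ⟨m, hm, h, hC⟩ := exists_cyc iq.1 iq.2
  have hR : Realizes (B2 m) P := by
    refine realizes2 hC ip.1 iq.1 hne (fun z hz => ?_)
    rw [← hi]
    exact ⟨fun h => ⟨hz, h⟩, fun h => h.2⟩
  refine ⟨m, ?_, hR⟩
  rw [hR.card, Nat.card_eq_fintype_card, Fintype.card_option, Fintype.card_option, ZMod.card]

/-- Two point sets of the same size with the same number `k ∈ {1,2}` of
internal points (collinearities allowed) have compatible triangulations. -/
theorem stmt3 (n k : ℕ) (hk : k = 1 ∨ k = 2)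
    (P Q : Finset Pt) (hPn : P.card = n) (hQn : Q.card = n)
    (hP : ¬ Collinear ℝ (P : Set Pt)) (hQ : ¬ Collinear ℝ (Q : Set Pt))
    (hPk : internalCount P = k) (hQk : internalCount Q = k) :
    ∃ TP TQ : Set (Sym2 Pt), IsTriangulation P TP ∧ IsTriangulation Q TQ ∧
      Compatible P Q TP TQ := by
  rcases hk with rfl | rfl
  · obtain ⟨m, hm, hR⟩ := exists_realizes1 hPk
    obtain ⟨m', hm', hR'⟩ := exists_realizes1 hQk
    obtain rfl : m = m' := by omega
    exact glue hR hR'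
  · obtain ⟨m, hm, hR⟩ := exists_realizes2 hPk
    obtain ⟨m', hm', hR'⟩ := exists_realizes2 hQk
    obtain rfl : m = m' := by omega
    exact glue hR hR'
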